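/- Let n ≥ 13, let G = S_n or G = A_n, and let (H_1, …, H_{n-2}) be a tuple of core-free subgroups of G. Then there exist elements g_1, …, g_{n-2} ∈ G and distinct points α, β ∈ [n] such that ⋂_{i=1}^{n-2} g_i H_i g_i^{-1} is contained in the two-element subgroup {1, (α β)} of S_n generated by the transposition (α β) swapping α and β. -/

import Mathlib

/-!
A subgroup of `S_n` or `A_n` which is core-free does not contain `A_n`, so it is intransitive,
imprimitive, or primitive without containing `A_n`. Conjugating the given subgroups by even
permutations, one estimates the smallest possible intersection, treating the nonprimitive groups and
the primitive groups differently.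

*Primitive groups.* Jordan-type arguments (two elements whose supports meet in one point have a
three-cycle as commutator) show that a primitive group `H` not containing `A_n`, for `n ≥ 13`, has
minimal degree greater than 5 (`IsSmallPrim.five_lt_card_support`). Consequently a nontrivial
permutation `x` lies in at most a proportion `2 / (n - 1)` of the even conjugates of `H`
(`numConj_le`): many conjugates of `x` have pairwise quotients which belong to few or no conjugates
of `H`. Averaging, every primitive group cuts the number of nontrivial elements of an intersection
by the factor `2 / (n - 1)` (`exists_conj_card_inf_le`).

*Nonprimitive groups.* The other groups are handled through colourings of the points that are
preserved by the intersection. An intransitive group adds a colour by separating two points of the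
same colour. An imprimitive group does the same as soon as there are two colours, because the number
of points of a given union of colours in the block of a point is an invariant. To begin without an
intransitive group, three imprimitive groups together produce four colours
(`Colors.of_three_imprim`). Hence `j` nonprimitive groups give `j + 1` colours, unless all of
them are imprimitive and `j ≤ 2`.

*Conclusion.* If all `n - 2` groups are nonprimitive, there are at least `n - 1` colours and the
intersection lies in a group generated by one transposition. If there are `t ≥ 1` primitive groups
and at least `n - 1 - t` colours, the intersection of the nonprimitive groups lies in a Young
subgroup of order at most `(t + 2)!`, and averaging over the primitive groups makes the intersection
trivial (`Reach.bot_of_young`); for large `t` one also uses that a primitive group meets the symmetric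
group on five points of the same colour trivially. If at most two groups are nonprimitive and no
colouring is available, Bochert's bound for the order of one primitive group and averaging over the
others suffice (`Reach.bot_of_prim`).
-/

/-- The conjugate `g H g⁻¹` of a subgroup `H` by an element `g`. -/
def conjSub {G : Type*} [Group G] (g : G) (H : Subgroup G) : Subgroup G :=
  H.map (MulAut.conj g).toMonoidHom

open Equiv Equiv.Perm

section

variable {n : ℕ}

/-! ### Elements of primitive groups: Jordan-type arguments -/

theorem perm_app_inv {α : Type*} (g : Perm α) (a : α) : g (g⁻¹ a) = a := by simp

theorem perm_inv_app {α : Type*} (g : Perm α) (a : α) : g⁻¹ (g a) = a := by simp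

/-- The commutator of two permutations whose supports meet in a single point is a three-cycle. -/
theorem isThreeCycle_commutator {α : Type*} [Fintype α] [DecidableEq α] {x y : Perm α} {c : α}
    (hx : x c ≠ c) (hy : y c ≠ c) (h : ∀ p, p ≠ c → x p = p ∨ y p = p) :
    (x * y * x⁻¹ * y⁻¹).IsThreeCycle := by
  have hxx : ∀ p, x p = p → x⁻¹ p = p := fun p hp => by rw [inv_eq_iff_eq]; exact hp.symm
  have hyy : ∀ p, y p = p → y⁻¹ p = p := fun p hp => by rw [inv_eq_iff_eq]; exact hp.symm
  have hxx' : ∀ p, x⁻¹ p = p → x p = p := fun p hp => by rw [inv_eq_iff_eq] at hp; exact hp.symm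
  have hyy' : ∀ p, y⁻¹ p = p → y p = p := fun p hp => by rw [inv_eq_iff_eq] at hp; exact hp.symm
  have ha : y (x c) = x c := (h _ hx).resolve_left fun e => hx (x.injective e)
  have hb : x (y c) = y c := (h _ hy).resolve_right fun e => hy (y.injective e)
  have hd : y (x⁻¹ c) = x⁻¹ c :=
    (h _ (fun e => hx (hxx' _ e))).resolve_left fun e => hx (hxx' _ (by simpa using e.symm))
  have he : x (y⁻¹ c) = y⁻¹ c :=
    (h _ (fun e => hy (hyy' _ e))).resolve_right fun e => hy (hyy' _ (by simpa using e.symm))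
  have hab : x c ≠ y c := fun e => by
    rw [e] at ha; exact hy (y.injective ha)
  have key : x * y * x⁻¹ * y⁻¹ = swap c (y c) * swap c (x c) := by
    ext p
    simp only [Perm.mul_apply]
    by_cases hpc : p = c
    · subst hpc
      rw [hxx _ he, ← Perm.mul_apply y, mul_inv_cancel, Perm.one_apply, swap_apply_left,
        swap_apply_of_ne_of_ne hx hab]
    by_cases hpb : p = y c
    · subst hpb
      rw [swap_apply_of_ne_of_ne hpc hab.symm, swap_apply_right, ← Perm.mul_apply y⁻¹,
        inv_mul_cancel, Perm.one_apply, hd, ← Perm.mul_apply, mul_inv_cancel, Perm.one_apply]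
    by_cases hpa : p = x c
    · subst hpa
      rw [swap_apply_right, swap_apply_left, hyy _ ha, ← Perm.mul_apply x⁻¹,
        inv_mul_cancel, Perm.one_apply, hb]
    rw [swap_apply_of_ne_of_ne hpc hpa, swap_apply_of_ne_of_ne hpc hpb]
    by_cases hyp : y p = p
    · rw [hyy _ hyp]
      by_cases hxp : x p = p
      · rw [hxx _ hxp, hyp, hxp]
      · have : y (x⁻¹ p) = x⁻¹ p := by
          refine (h _ fun e => hpa (by rw [← e]; simp)).resolve_left fun e => hxp ?_
          exact hxx' _ (by simpa using e.symm)
        rw [this]; simp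
    · have h1 : x p = p := (h _ hpc).resolve_right hyp
      have : x (y⁻¹ p) = y⁻¹ p := by
          refine (h _ fun e => hpb (by rw [← e]; simp)).resolve_right fun e => hyp ?_
          exact hyy' _ (by simpa using e.symm)
      rw [hxx _ this]; simp [h1]
  rw [key]
  exact isThreeCycle_swap_mul_swap_same hy.symm hx.symm hab.symm


/-- `H` is a primitive permutation group not containing the alternating group. -/
def IsSmallPrim (H : Subgroup (Perm (Fin n))) : Prop :=
  MulAction.IsPreprimitive H (Fin n) ∧ ¬ alternatingGroup (Fin n) ≤ H

theorem IsSmallPrim.not_isThreeCycle {H : Subgroup (Perm (Fin n))} (hH : IsSmallPrim H)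
    {x : Perm (Fin n)} (hx : x ∈ H) : ¬ x.IsThreeCycle := fun h =>
  hH.2 (alternatingGroup_le_of_isPreprimitive_of_isThreeCycle_mem hH.1 h hx)

theorem IsSmallPrim.not_isSwap {H : Subgroup (Perm (Fin n))} (hH : IsSmallPrim H)
    {x : Perm (Fin n)} (hx : x ∈ H) : ¬ x.IsSwap := fun h =>
  hH.2 (by rw [subgroup_eq_top_of_isPreprimitive_of_isSwap_mem hH.1 _ h hx]; exact le_top)

/-- By Jordan's theorem on three-cycles, two elements of a primitive group not containing the
alternating group cannot have supports meeting in exactly one point. -/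
theorem IsSmallPrim.not_meet {H : Subgroup (Perm (Fin n))} (hH : IsSmallPrim H)
    {x y : Perm (Fin n)} (hx : x ∈ H) (hy : y ∈ H) {c : Fin n}
    (hxc : x c ≠ c) (hyc : y c ≠ c) (h : ∀ p, p ≠ c → x p = p ∨ y p = p) : False :=
  hH.not_isThreeCycle (H.mul_mem (H.mul_mem (H.mul_mem hx hy) (H.inv_mem hx)) (H.inv_mem hy))
    (isThreeCycle_commutator hxc hyc h)

/-- A `p`-transitive group maps any `p`-subset onto any other. -/
theorem exists_mem_map_finset {H : Subgroup (Perm (Fin n))} {p : ℕ} {S S' : Finset (Fin n)}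
    (hm : MulAction.IsMultiplyPretransitive H (Fin n) p) (hS : S.card = p) (hS' : S'.card = p) :
    ∃ h ∈ H, ∀ a, a ∈ S ↔ h a ∈ S' := by
  let e := S.equivFinOfCardEq hS
  let e' := S'.equivFinOfCardEq hS'
  rw [MulAction.isMultiplyPretransitive_iff] at hm
  obtain ⟨h, hh⟩ := hm (e.symm.toEmbedding.trans (Function.Embedding.subtype _))
    (e'.symm.toEmbedding.trans (Function.Embedding.subtype _))
  have key : ∀ i, (h : Perm (Fin n)) (e.symm i) = e'.symm i := fun i => by
    simpa [Subgroup.smul_def] using DFunLike.congr_fun hh i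
  refine ⟨h, h.2, fun a => ⟨fun ha => ?_, fun ha => ?_⟩⟩
  · have := key (e ⟨a, ha⟩)
    rw [e.symm_apply_apply] at this
    rw [this]
    exact (e'.symm _).2
  · have := key (e' ⟨_, ha⟩)
    rw [e'.symm_apply_apply] at this
    rw [← (h : Perm (Fin n)).injective this]
    exact (e.symm _).2

/-- Jordan's theorem on cycles of prime length, for cycles moving at most about half of the points.
The pointwise stabilizer of the complement of the cycle acts primitively on the cycle, so `H` is
highly transitive, and then a conjugate of the cycle meets it in a single point. -/
theorem IsSmallPrim.not_isCycle {H : Subgroup (Perm (Fin n))} (hH : IsSmallPrim H)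
    {x : Perm (Fin n)} (hx : x ∈ H) (hc : x.IsCycle) (hp : x.support.card.Prime)
    (hn : 2 * x.support.card ≤ n + 1) (hn2 : x.support.card + 2 ≤ n) (h3 : 2 < x.support.card) :
    False := by
  classical
  set p := x.support.card with hpdef
  have htr := isPretransitive_of_isCycle_mem (G := H) hc hx
  have hcard : Nat.card (SubMulAction.ofFixingSubgroup H ((x.support : Set (Fin n))ᶜ)) = p := by
    rw [hpdef, ← Set.ncard_coe_finset, ← Nat.card_coe_set_eq]
    refine Nat.card_congr (Equiv.subtypeEquivRight fun z => ?_)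
    simp [SubMulAction.mem_ofFixingSubgroup_iff]
  have hpr : MulAction.IsPreprimitive (fixingSubgroup H ((x.support : Set (Fin n))ᶜ))
    (SubMulAction.ofFixingSubgroup H ((x.support : Set (Fin n))ᶜ)) :=
    MulAction.IsPreprimitive.of_prime_card (by rw [hcard]; exact hp)
  have hnc : ((x.support : Set (Fin n))ᶜ).ncard = (n - p - 1) + 1 := by
    rw [Set.ncard_compl, Set.ncard_coe_finset, Nat.card_fin]; omega
  have hm := MulAction.IsPreprimitive.isMultiplyPreprimitive hH.1 hnc (by simp; omega) hpr
  have hm1 := hm.isMultiplyPretransitive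
  have hm2 : MulAction.IsMultiplyPretransitive H (Fin n) p :=
    MulAction.isMultiplyPretransitive_of_le (n := n - p - 1 + 2) (by omega) (by simp; omega)
  -- Move the support of `x` so that only one of its points stays inside.
  obtain ⟨c, hcs⟩ : x.support.Nonempty := by
    rw [← Finset.card_pos]; omega
  obtain ⟨T, hTs, hTc⟩ : ∃ T ⊆ x.supportᶜ, T.card = p - 1 :=
    Finset.exists_subset_card_eq (by rw [Finset.card_compl, Fintype.card_fin]; omega)
  have hcT : c ∉ T := fun h => by simpa [hcs] using hTs h
  obtain ⟨h, hh, hS⟩ := exists_mem_map_finset (H := H) (S := x.support) (S' := insert c T) hm2 rfl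
    (by rw [Finset.card_insert_of_notMem hcT]; omega)
  refine hH.not_meet hx (H.mul_mem (H.mul_mem hh hx) (H.inv_mem hh)) (c := c)
    (by simpa using hcs) ?_ fun q hq => ?_
  · have : h⁻¹ c ∈ x.support := by rw [hS]; simp
    intro e
    rw [Perm.mul_apply, Perm.mul_apply, ← Perm.eq_inv_iff_eq] at e
    exact (by simpa using this : x (h⁻¹ c) ≠ h⁻¹ c) e
  · by_cases hqs : q ∈ x.support
    · right
      have : h⁻¹ q ∉ x.support := by
        rw [hS]
        simp only [perm_app_inv, Finset.mem_insert, not_or]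
        exact ⟨hq, fun hqT => by simpa [hqs] using hTs hqT⟩
      rw [notMem_support] at this
      rw [Perm.mul_apply, Perm.mul_apply, this, perm_app_inv]
    · left; simpa using hqs

/-! ### Double transpositions on seven points -/

/-- The three products of two disjoint transpositions on `{a, b, c, d}`. -/
def dt {α : Type*} [DecidableEq α] (i : Fin 3) (a b c d : α) : Perm α :=
  ![swap a b * swap c d, swap a c * swap b d, swap a d * swap b c] i

/-- An involution with support `{a, b, c, d}` is one of the three products of two disjoint
transpositions. -/
theorem exists_eq_dt {α : Type*} [Fintype α] [DecidableEq α] {w : Perm α} {a b c d : α}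
    (hw : w * w = 1) (hs : w.support = {a, b, c, d}) (hab : a ≠ b) (hac : a ≠ c) (had : a ≠ d)
    (hbc : b ≠ c) (hbd : b ≠ d) (hcd : c ≠ d) : ∃ i, w = dt i a b c d := by
  have hww : ∀ p, w (w p) = p := fun p => by rw [← Perm.mul_apply, hw, Perm.one_apply]
  have hm : ∀ p, w p ≠ p ↔ p = a ∨ p = b ∨ p = c ∨ p = d := fun p => by
    rw [← mem_support, hs]; simp
  have hin : ∀ p, w p ≠ p → w (w p) ≠ w p := fun p hp h => hp (w.injective h)
  have ha := (hm a).2 (by simp)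
  have hb := (hm b).2 (by simp)
  have hc := (hm c).2 (by simp)
  have hd := (hm d).2 (by simp)
  have ha' := (hm _).1 (hin _ ha)
  have hb' := (hm _).1 (hin _ hb)
  have hc' := (hm _).1 (hin _ hc)
  have hd' := (hm _).1 (hin _ hd)
  rcases ha' with h | h | h | h
  · exact absurd h ha
  · refine ⟨0, ?_⟩
    ext p
    change _ = (swap a b * swap c d) p
    simp only [Perm.mul_apply, swap_apply_def]
    grind
  · refine ⟨1, ?_⟩
    ext p
    change _ = (swap a c * swap b d) p
    simp only [Perm.mul_apply, swap_apply_def]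
    grind
  · refine ⟨2, ?_⟩
    ext p
    change _ = (swap a d * swap b c) p
    simp only [Perm.mul_apply, swap_apply_def]
    grind

theorem viaEmbedding_swap {α β : Type*} [DecidableEq α] [DecidableEq β] (f : α ↪ β) (a b : α) :
    (swap a b).viaEmbedding f = swap (f a) (f b) := by
  ext p
  by_cases hp : p ∈ Set.range f
  · obtain ⟨q, rfl⟩ := hp
    rw [viaEmbedding_apply]
    simp only [swap_apply_def, f.injective.eq_iff]
    split_ifs <;> rfl
  · rw [viaEmbedding_apply_of_notMem _ _ _ hp, swap_apply_of_ne_of_ne]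
    · rintro rfl; exact hp ⟨a, rfl⟩
    · rintro rfl; exact hp ⟨b, rfl⟩

theorem viaEmbedding_dt {α β : Type*} [DecidableEq α] [DecidableEq β] (f : α ↪ β) (i : Fin 3)
    (a b c d : α) : viaEmbeddingHom f (dt i a b c d) = dt i (f a) (f b) (f c) (f d) := by
  fin_cases i <;> simp [dt, viaEmbeddingHom_apply, viaEmbedding_swap, map_mul]


/-- A nontrivial permutation `z` of seven points with `z ^ p = 1` and fewer than `2 * p` moved points
is a `p`-cycle, so its image does not lie in `H`. -/
theorem IsSmallPrim.not_isCycle_viaEmbedding {H : Subgroup (Perm (Fin n))} (hH : IsSmallPrim H)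
    (hn : 13 ≤ n) (f : Fin 7 ↪ Fin n) {z : Perm (Fin 7)} (hz : viaEmbeddingHom f z ∈ H)
    {p : ℕ} (hp : p.Prime) (h2 : 2 < p) (hzp : z ^ p = 1) (hz1 : z ≠ 1)
    (hs : z.support.card < 2 * p) : False := by
  have := Fact.mk hp
  have ho : orderOf z = p := orderOf_eq_prime hzp hz1
  have hc : z.IsCycle := isCycle_of_prime_order (by rwa [ho]) (by rwa [ho])
  have hcard : z.support.card = p := by rw [← hc.orderOf, ho]
  have h7 : z.support.card ≤ 7 := by
    simpa using Finset.card_le_univ z.support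
  have hs' : (viaEmbeddingHom f z).support.card = p := by
    rw [viaEmbeddingHom_apply, viaEmbedding, ← hcard]
    convert card_support_extend_domain (ofInjective f.1 f.2) (g := z)
  have hc' : (viaEmbeddingHom f z).IsCycle := by
    rw [viaEmbeddingHom_apply, viaEmbedding]; convert hc.extendDomain (ofInjective f.1 f.2)
  exact hH.not_isCycle hz hc' (by rwa [hs']) (by omega) (by omega) (by omega)

/-- If two double transpositions have supports sharing three points, then their product is a cycle of
length three or five. -/
theorem dt_three_overlap (i j : Fin 3) :
    let z := dt i (0 : Fin 7) 1 2 3 * dt j 0 1 2 4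
    (z ^ 3 = 1 ∧ z.support.card < 6 ∨ z ^ 5 = 1 ∧ z.support.card < 10) ∧ z ≠ 1 := by
  revert i j; decide

set_option maxRecDepth 4000 in
/-- Three double transpositions on the lines `{0,1,2,3}`, `{0,1,4,5}`, `{0,2,4,6}` have a product which
is a cycle of length 3, 5 or 7, except when some words in them give two distinct involutions with the
same support of size four. -/
theorem dt_config (i j k : Fin 3) :
    let x := dt i (0 : Fin 7) 1 2 3
    let y := dt j (0 : Fin 7) 1 4 5
    let w := dt k (0 : Fin 7) 2 4 6
    let z := x * y * w
    (z ^ 3 = 1 ∧ z.support.card < 6 ∧ z ≠ 1) ∨ (z ^ 5 = 1 ∧ z.support.card < 10 ∧ z ≠ 1) ∨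
    (z ^ 7 = 1 ∧ z.support.card < 14 ∧ z ≠ 1) ∨
    (∃ uv ∈ [(x, w * x * w), (y, w * y * w), (x * y, w * x * y * w), (y, x * y * x),
        (x, y * x * y), (w, y * w * y), (w, x * w * x), (x * w, y * x * w * y),
        (y * w, x * y * w * x), (x * y * x * w, x * y * w * y)],
      uv.1 * uv.1 = 1 ∧ uv.2 * uv.2 = 1 ∧ uv.1.support.card = 4 ∧ uv.2.support = uv.1.support ∧
      uv.1 ≠ uv.2) := by
  revert i j k; decide

/-! ### Configurations of double transpositions in a primitive group -/

/-- `S` is the support of a double transposition belonging to `H`. -/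
def IsDTSupp (H : Subgroup (Perm (Fin n))) (S : Finset (Fin n)) : Prop :=
  S.card = 4 ∧ ∃ w ∈ H, w * w = 1 ∧ w.support = S

/-- Coordinates on a seven-point subset turn a double transposition in `H` into one of the standard
permutations of `Fin 7`. -/
theorem IsDTSupp.exists_dt {H : Subgroup (Perm (Fin n))} (f : Fin 7 ↪ Fin n) {a b c d : Fin 7}
    (h : IsDTSupp H {f a, f b, f c, f d})
    (hab : a ≠ b) (hac : a ≠ c) (had : a ≠ d)
    (hbc : b ≠ c) (hbd : b ≠ d) (hcd : c ≠ d) : ∃ i, viaEmbeddingHom f (dt i a b c d) ∈ H := by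
  obtain ⟨-, w, hw, hww, hs⟩ := h
  have hf := fun x y : Fin 7 => (f.injective.ne_iff (x := x) (y := y)).2
  obtain ⟨i, rfl⟩ := exists_eq_dt hww hs (hf _ _ hab) (hf _ _ hac) (hf _ _ had) (hf _ _ hbc)
    (hf _ _ hbd) (hf _ _ hcd)
  exact ⟨i, by rwa [viaEmbedding_dt]⟩

theorem IsDTSupp.card_inter_ne_one {H : Subgroup (Perm (Fin n))} (hH : IsSmallPrim H)
    {S T : Finset (Fin n)} (hS : IsDTSupp H S) (hT : IsDTSupp H T) : (S ∩ T).card ≠ 1 := by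
  obtain ⟨-, w, hw, -, rfl⟩ := hS
  obtain ⟨-, w', hw', -, rfl⟩ := hT
  intro h
  obtain ⟨c, hc⟩ := Finset.card_eq_one.1 h
  have hm : ∀ p, (w p ≠ p ∧ w' p ≠ p) ↔ p = c := fun p => by
    have := Finset.ext_iff.1 hc p
    simpa using this
  refine hH.not_meet hw hw' ((hm c).2 rfl).1 ((hm c).2 rfl).2 fun p hp => ?_
  by_contra! hcon
  exact hp ((hm p).1 hcon)

/-- Any injective family of at most seven points extends to an embedding of `Fin 7`. -/
theorem exists_emb7 (hn : 13 ≤ n) (k : ℕ) (hk : k ≤ 7) (v : Fin k → Fin n)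
    (hv : Function.Injective v) : ∃ f : Fin 7 ↪ Fin n, ∀ i : Fin k, f (Fin.castLE hk i) = v i := by
  obtain ⟨σ, hσ⟩ : ∃ σ : Perm (Fin n), ∀ i : Fin k, σ (Fin.castLE (by omega) i) = v i := by
    have hkn : k ≤ n := by omega
    have := Equiv.Perm.exists_extending_pair (fun i : Fin k => (Fin.castLE hkn i : Fin n)) v
      (Fin.castLE_injective _) hv
    exact this
  exact ⟨(Fin.castLEEmb (by omega)).trans σ.toEmbedding, fun i => by simpa using hσ i⟩

theorem IsDTSupp.card_inter_ne_three {H : Subgroup (Perm (Fin n))} (hH : IsSmallPrim H)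
    (hn : 13 ≤ n)
    {S T : Finset (Fin n)} (hS : IsDTSupp H S) (hT : IsDTSupp H T) : (S ∩ T).card ≠ 3 := by
  intro h
  obtain ⟨a, b, c, hab, hac, hbc, habc⟩ := Finset.card_eq_three.1 h
  have h1 : (S \ T).card = 1 := by
    have := Finset.card_sdiff_add_card_inter S T
    have := hS.1; omega
  have h2 : (T \ S).card = 1 := by
    have := Finset.card_sdiff_add_card_inter T S
    rw [Finset.inter_comm] at this
    have := hT.1; omega
  obtain ⟨d, hd⟩ := Finset.card_eq_one.1 h1
  obtain ⟨e, he⟩ := Finset.card_eq_one.1 h2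
  have hST := Finset.ext_iff.1 habc
  have hSd := Finset.ext_iff.1 hd
  have hTe := Finset.ext_iff.1 he
  simp only [Finset.mem_inter, Finset.mem_sdiff, Finset.mem_insert, Finset.mem_singleton]
    at hST hSd hTe
  have hS' : S = {a, b, c, d} := by
    ext p; simp only [Finset.mem_insert, Finset.mem_singleton]; grind
  have hT' : T = {a, b, c, e} := by
    ext p; simp only [Finset.mem_insert, Finset.mem_singleton]; grind
  obtain ⟨f, hf⟩ := exists_emb7 hn 5 (by norm_num) ![a, b, c, d, e] (by
    have hda : d ≠ a := by grind
    have hdb : d ≠ b := by grind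
    have hdc : d ≠ c := by grind
    have hea : e ≠ a := by grind
    have heb : e ≠ b := by grind
    have hec : e ≠ c := by grind
    have hde : d ≠ e := by grind
    intro i j hij
    fin_cases i <;> fin_cases j <;> simp_all)
  have f0 : f 0 = a := hf 0
  have f1 : f 1 = b := hf 1
  have f2 : f 2 = c := hf 2
  have f3 : f 3 = d := hf 3
  have f4 : f 4 = e := hf 4
  rw [hS', ← f0, ← f1, ← f2, ← f3] at hS
  rw [hT', ← f0, ← f1, ← f2, ← f4] at hT
  obtain ⟨i, hi⟩ := hS.exists_dt f (by decide) (by decide) (by decide) (by decide) (by decide)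
    (by decide)
  obtain ⟨j, hj⟩ := hT.exists_dt f (by decide) (by decide) (by decide) (by decide) (by decide)
    (by decide)
  have hz := H.mul_mem hi hj
  rw [← map_mul] at hz
  obtain ⟨h3 | h5, hne⟩ := dt_three_overlap i j
  · exact hH.not_isCycle_viaEmbedding hn f hz Nat.prime_three (by norm_num) h3.1 hne h3.2
  · exact hH.not_isCycle_viaEmbedding hn f hz Nat.prime_five (by norm_num) h5.1 hne h5.2

/-- An `H`-invariant nonempty family `P` of supports of double transpositions contains three members
such that any two share exactly two points and all three share exactly one. -/
theorem exists_dt_config {H : Subgroup (Perm (Fin n))} (hH : IsSmallPrim H) (hn : 13 ≤ n)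
    (P : Finset (Fin n) → Prop) (hP : ∀ S, P S → IsDTSupp H S)
    (hc : ∀ S, ∀ h ∈ H, P S → P (S.map h.toEmbedding)) {A : Finset (Fin n)} (hA : P A) :
    ∃ f : Fin 7 ↪ Fin n, P {f 0, f 1, f 2, f 3} ∧ P {f 0, f 1, f 4, f 5} ∧
      P {f 0, f 2, f 4, f 6} := by
  have := hH.1
  have hr : ∀ a ∈ A, ∀ b, a ≠ b → ∃ C, P C ∧ a ∈ C ∧ b ∉ C := fun a ha b hab => by
    obtain ⟨g, hg, hg'⟩ := MulAction.IsPreprimitive.exists_mem_smul_and_notMem_smul (G := H)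
      (A.finite_toSet) ⟨a, ha⟩ (by
        intro h
        have h1 := (hP A hA).1
        rw [Finset.coe_eq_univ.1 h] at h1
        simp at h1; omega) hab
    refine ⟨A.map (g : Perm (Fin n)).toEmbedding, hc A _ g.2 hA, ?_, ?_⟩
    · simp only [Set.mem_smul_set] at hg
      obtain ⟨x, hx, hxa⟩ := hg
      exact Finset.mem_map.2 ⟨x, hx, hxa⟩
    · intro h
      obtain ⟨x, hx, hxa⟩ := Finset.mem_map.1 h
      exact hg' (Set.mem_smul_set.2 ⟨x, hx, hxa⟩)
  have hinter : ∀ S T, P S → P T → ∀ a b, a ∈ S → a ∈ T → b ∈ S → b ∉ T →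
      (S ∩ T).card = 2 := fun S T hS hT a b h1 h2 h3 h4 => by
    have e1 := (hP S hS).card_inter_ne_one hH (hP T hT)
    have e2 := (hP S hS).card_inter_ne_three hH hn (hP T hT)
    have e3 : 0 < (S ∩ T).card := Finset.card_pos.2 ⟨a, Finset.mem_inter.2 ⟨h1, h2⟩⟩
    have e4 : (S ∩ T).card < S.card := Finset.card_lt_card
      ⟨Finset.inter_subset_left, fun h => h4 (Finset.mem_inter.1 (h h3)).2⟩
    have := (hP S hS).1
    omega
  obtain ⟨a, ha, b0, hb0, hab0⟩ := Finset.one_lt_card.1 (by rw [(hP A hA).1]; norm_num : 1 < A.card)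
  obtain ⟨B, hB, haB, hb0B⟩ := hr a ha b0 hab0
  have hAB := hinter A B hA hB a b0 ha haB hb0 hb0B
  obtain ⟨a', ha', haa'⟩ := Finset.exists_mem_ne (by omega : 1 < (A ∩ B).card) a
  obtain ⟨ha'A, ha'B⟩ := Finset.mem_inter.1 ha'
  obtain ⟨C, hC, haC, ha'C⟩ := hr a ha a' haa'.symm
  have hAC := hinter A C hA hC a a' ha haC ha'A ha'C
  have hBC := hinter B C hB hC a a' haB haC ha'B ha'C
  obtain ⟨b, hb, hba⟩ := Finset.exists_mem_ne (by omega : 1 < (A ∩ C).card) a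
  obtain ⟨e, he, hea⟩ := Finset.exists_mem_ne (by omega : 1 < (B ∩ C).card) a
  rw [Finset.mem_inter] at hb he
  have eAB : A ∩ B = {a, a'} := (Finset.eq_of_subset_of_card_le (by
    intro x; simp; rintro (rfl | rfl) <;> simp [*]) (by rw [hAB, Finset.card_pair haa'.symm])).symm
  have eAC : A ∩ C = {a, b} := (Finset.eq_of_subset_of_card_le (by
    intro x; simp; rintro (rfl | rfl) <;> simp [*]) (by rw [hAC, Finset.card_pair hba.symm])).symm
  have eBC : B ∩ C = {a, e} := (Finset.eq_of_subset_of_card_le (by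
    intro x; simp; rintro (rfl | rfl) <;> simp [*]) (by rw [hBC, Finset.card_pair hea.symm])).symm
  have hbB : b ∉ B := fun h => by
    have : b ∈ A ∩ B := by simp [h, hb.1]
    rw [eAB] at this; simp only [Finset.mem_insert, Finset.mem_singleton] at this
    rcases this with h | h
    · exact hba h
    · exact ha'C (h ▸ hb.2)
  have heA : e ∉ A := fun h => by
    have : e ∈ A ∩ B := by simp [h, he.1]
    rw [eAB] at this; simp only [Finset.mem_insert, Finset.mem_singleton] at this
    rcases this with h | h
    · exact hea h
    · exact ha'C (h ▸ he.2)
  have hfourth : ∀ S, P S → ∀ x y z, x ∈ S → y ∈ S → z ∈ S → x ≠ y → x ≠ z → y ≠ z →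
      ∃ w ∈ S, w ≠ x ∧ w ≠ y ∧ w ≠ z ∧ S = {x, y, z, w} := by
    intro S hS x y z hx hy hz hxy hxz hyz
    have h3 : ({x, y, z} : Finset (Fin n)).card = 3 := Finset.card_eq_three.2
      ⟨x, y, z, hxy, hxz, hyz, rfl⟩
    obtain ⟨w, hw, hw'⟩ := Finset.exists_mem_notMem_of_card_lt_card
      (s := {x, y, z}) (t := S) (by rw [h3, (hP S hS).1]; norm_num)
    simp only [Finset.mem_insert, Finset.mem_singleton, not_or] at hw'
    refine ⟨w, hw, hw'.1, hw'.2.1, hw'.2.2, (Finset.eq_of_subset_of_card_le ?_ ?_).symm⟩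
    · intro t; simp only [Finset.mem_insert, Finset.mem_singleton]
      rintro (rfl | rfl | rfl | rfl) <;> assumption
    · rw [(hP S hS).1, Finset.card_eq_succ.2 ⟨x, {y, z, w}, ?_, rfl, Finset.card_eq_three.2
        ⟨y, z, w, hyz, Ne.symm hw'.2.1, Ne.symm hw'.2.2, rfl⟩⟩]
      simp only [Finset.mem_insert, Finset.mem_singleton, not_or]
      exact ⟨hxy, hxz, Ne.symm hw'.1⟩
  have hbne : b ≠ a' := fun h => ha'C (h ▸ hb.2)
  have hene : e ≠ a' := fun h => ha'C (h ▸ he.2)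
  have hbe : b ≠ e := fun h => hbB (h ▸ he.1)
  obtain ⟨d, hd, d1, d2, d3, hAe⟩ := hfourth A hA a a' b ha ha'A hb.1 haa'.symm hba.symm hbne.symm
  obtain ⟨f, hf, f1, f2, f3, hBe⟩ := hfourth B hB a a' e haB ha'B he.1 haa'.symm hea.symm hene.symm
  obtain ⟨h, hh, h1, h2, h3, hCe⟩ := hfourth C hC a b e haC hb.2 he.2 hba.symm hea.symm hbe
  have hAB' := Finset.ext_iff.1 eAB
  have hAC' := Finset.ext_iff.1 eAC
  have hBC' := Finset.ext_iff.1 eBC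
  simp only [Finset.mem_inter, Finset.mem_insert, Finset.mem_singleton] at hAB' hAC' hBC'
  have hdB : d ∉ B := fun q => ((hAB' d).1 ⟨hd, q⟩).elim d1 d2
  have hfA : f ∉ A := fun q => ((hAB' f).1 ⟨q, hf⟩).elim f1 f2
  have hhA : h ∉ A := fun q => ((hAC' h).1 ⟨q, hh⟩).elim h1 h2
  have hhB : h ∉ B := fun q => ((hBC' h).1 ⟨q, hh⟩).elim h1 h3
  obtain ⟨φ, hφ⟩ := exists_emb7 hn 7 (by norm_num) ![a, a', b, d, e, f, h] (by
    have n1 : d ≠ e := fun h => hdB (h ▸ he.1)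
    have n2 : d ≠ f := fun h => hdB (h ▸ hf)
    have n3 : d ≠ h := fun h => hhA (h ▸ hd)
    have n4 : f ≠ h := fun h => hhB (h ▸ hf)
    have n5 : b ≠ f := fun h => hbB (h ▸ hf)
    have n6 : a' ≠ h := fun h => hhA (h ▸ ha'A)
    intro i j hij
    fin_cases i <;> fin_cases j <;> first | rfl | (exfalso; simp at hij; grind))
  have g0 : φ 0 = a := hφ 0
  have g1 : φ 1 = a' := hφ 1
  have g2 : φ 2 = b := hφ 2
  have g3 : φ 3 = d := hφ 3
  have g4 : φ 4 = e := hφ 4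
  have g5 : φ 5 = f := hφ 5
  have g6 : φ 6 = h := hφ 6
  refine ⟨φ, ?_, ?_, ?_⟩
  · rw [g0, g1, g2, g3, ← hAe]; exact hA
  · rw [g0, g1, g4, g5, ← hBe]; exact hB
  · rw [g0, g2, g4, g6, ← hCe]; exact hC

/-! ### The minimal degree of a primitive group -/

/-- `S` is the support of two distinct double transpositions belonging to `H`; their products then form
the regular Klein four-group on `S`. -/
def IsV4Supp (H : Subgroup (Perm (Fin n))) (S : Finset (Fin n)) : Prop :=
  S.card = 4 ∧ ∃ u ∈ H, ∃ v ∈ H, u ≠ v ∧ u * u = 1 ∧ v * v = 1 ∧ u.support = S ∧ v.support = S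

theorem IsV4Supp.isDTSupp {H : Subgroup (Perm (Fin n))} {S : Finset (Fin n)}
    (h : IsV4Supp H S) : IsDTSupp H S := by
  obtain ⟨h4, u, hu, v, hv, -, huu, -, hs, -⟩ := h
  exact ⟨h4, u, hu, huu, hs⟩

theorem IsDTSupp.map {H : Subgroup (Perm (Fin n))} {S : Finset (Fin n)}
    (hS : IsDTSupp H S) {h : Perm (Fin n)} (hh : h ∈ H) : IsDTSupp H (S.map h.toEmbedding) := by
  obtain ⟨h4, u, hu, huu, hs⟩ := hS
  refine ⟨by simpa using h4, h * u * h⁻¹, H.mul_mem (H.mul_mem hh hu) (H.inv_mem hh), ?_, ?_⟩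
  · rw [show h * u * h⁻¹ * (h * u * h⁻¹) = h * (u * u) * h⁻¹ by group, huu]; group
  · rw [support_conj, hs]

theorem IsV4Supp.map {H : Subgroup (Perm (Fin n))} {S : Finset (Fin n)}
    (hS : IsV4Supp H S) {h : Perm (Fin n)} (hh : h ∈ H) : IsV4Supp H (S.map h.toEmbedding) := by
  obtain ⟨h4, u, hu, v, hv, huv, huu, hvv, hsu, hsv⟩ := hS
  refine ⟨by simpa using h4, h * u * h⁻¹, H.mul_mem (H.mul_mem hh hu) (H.inv_mem hh),
    h * v * h⁻¹, H.mul_mem (H.mul_mem hh hv) (H.inv_mem hh), fun e => huv ?_, ?_, ?_, ?_, ?_⟩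
  · simpa using e
  · rw [show h * u * h⁻¹ * (h * u * h⁻¹) = h * (u * u) * h⁻¹ by group, huu]; group
  · rw [show h * v * h⁻¹ * (h * v * h⁻¹) = h * (v * v) * h⁻¹ by group, hvv]; group
  · rw [support_conj, hsu]
  · rw [support_conj, hsv]

/-- If two of the three double transpositions on a four-point set lie in `H`, then so does the third.
The hypothesis `hdec` is a finite verification on `Fin 7`. -/
theorem IsV4Supp.forall_dt {H : Subgroup (Perm (Fin n))} (f : Fin 7 ↪ Fin n) {a b c d : Fin 7}
    (h : IsV4Supp H {f a, f b, f c, f d})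
    (hab : a ≠ b) (hac : a ≠ c) (had : a ≠ d)
    (hbc : b ≠ c) (hbd : b ≠ d) (hcd : c ≠ d)
    (hdec : ∀ i j k, i ≠ j → k = i ∨ k = j ∨ dt k a b c d = dt i a b c d * dt j a b c d)
    (k : Fin 3) : viaEmbeddingHom f (dt k a b c d) ∈ H := by
  obtain ⟨-, u, hu, v, hv, huv, huu, hvv, hsu, hsv⟩ := h
  have hf := fun x y : Fin 7 => (f.injective.ne_iff (x := x) (y := y)).2
  obtain ⟨i, rfl⟩ := exists_eq_dt huu hsu (hf _ _ hab) (hf _ _ hac) (hf _ _ had) (hf _ _ hbc)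
    (hf _ _ hbd) (hf _ _ hcd)
  obtain ⟨j, rfl⟩ := exists_eq_dt hvv hsv (hf _ _ hab) (hf _ _ hac) (hf _ _ had) (hf _ _ hbc)
    (hf _ _ hbd) (hf _ _ hcd)
  rw [← viaEmbedding_dt] at hu hv
  rcases hdec i j k (fun e => huv (by rw [e])) with rfl | rfl | e
  · exact hu
  · exact hv
  · rw [e, map_mul]; exact H.mul_mem hu hv

theorem support_viaEmbedding_congr (f : Fin 7 ↪ Fin n) {u v : Perm (Fin 7)}
    (h : u.support = v.support) : (viaEmbeddingHom f u).support = (viaEmbeddingHom f v).support := by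
  ext p
  rw [mem_support, mem_support, viaEmbeddingHom_apply, viaEmbeddingHom_apply]
  by_cases hp : p ∈ Set.range f
  · obtain ⟨q, rfl⟩ := hp
    rw [viaEmbedding_apply, viaEmbedding_apply, f.injective.ne_iff, f.injective.ne_iff,
      ← mem_support, ← mem_support, h]
  · rw [viaEmbedding_apply_of_notMem _ _ _ hp, viaEmbedding_apply_of_notMem _ _ _ hp]

theorem card_support_viaEmbedding (f : Fin 7 ↪ Fin n) (z : Perm (Fin 7)) :
    (viaEmbeddingHom f z).support.card = z.support.card := by
  rw [viaEmbeddingHom_apply, viaEmbedding]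
  convert card_support_extend_domain (ofInjective f.1 f.2) (g := z)

set_option maxRecDepth 4000 in
/-- Three Klein four-groups in the position of `exists_dt_config` generate a group containing a cycle
of prime length on few points. -/
theorem IsSmallPrim.not_isV4Supp {H : Subgroup (Perm (Fin n))} (hH : IsSmallPrim H) (hn : 13 ≤ n)
    {A : Finset (Fin n)} (hA : IsV4Supp H A) : False := by
  obtain ⟨f, h1, h2, h3⟩ := exists_dt_config hH hn (IsV4Supp H) (fun S => IsV4Supp.isDTSupp)
    (fun S h hh hS => hS.map hh) hA
  have m1 := h1.forall_dt f (by decide) (by decide) (by decide) (by decide) (by decide)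
    (by decide) (by decide) 0
  have m2 := h2.forall_dt f (by decide) (by decide) (by decide) (by decide) (by decide)
    (by decide) (by decide) 1
  have m3 := h3.forall_dt f (by decide) (by decide) (by decide) (by decide) (by decide)
    (by decide) (by decide) 0
  have hz := H.mul_mem (H.mul_mem m1 m2) m3
  rw [← map_mul, ← map_mul] at hz
  have : ∃ p, p.Prime ∧ 2 < p ∧
      (dt 0 (0 : Fin 7) 1 2 3 * dt 1 0 1 4 5 * dt 0 0 2 4 6) ^ p = 1 ∧
      (dt 0 (0 : Fin 7) 1 2 3 * dt 1 0 1 4 5 * dt 0 0 2 4 6) ≠ 1 ∧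
      (dt 0 (0 : Fin 7) 1 2 3 * dt 1 0 1 4 5 * dt 0 0 2 4 6).support.card < 2 * p :=
    ⟨7, by norm_num, by norm_num, by decide, by decide, by decide⟩
  obtain ⟨p, hp, hp2, hzp, hz1, hs⟩ := this
  exact hH.not_isCycle_viaEmbedding hn f hz hp hp2 hzp hz1 hs

/-- A primitive group of degree at least 13 not containing the alternating group contains no double
transposition. -/
theorem IsSmallPrim.not_isDTSupp {H : Subgroup (Perm (Fin n))} (hH : IsSmallPrim H) (hn : 13 ≤ n)
    {A : Finset (Fin n)} (hA : IsDTSupp H A) : False := by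
  obtain ⟨f, h1, h2, h3⟩ := exists_dt_config hH hn (IsDTSupp H) (fun S hS => hS)
    (fun S h hh hS => hS.map hh) hA
  obtain ⟨i, mx⟩ := h1.exists_dt f (by decide) (by decide) (by decide) (by decide) (by decide)
    (by decide)
  obtain ⟨j, my⟩ := h2.exists_dt f (by decide) (by decide) (by decide) (by decide) (by decide)
    (by decide)
  obtain ⟨k, mw⟩ := h3.exists_dt f (by decide) (by decide) (by decide) (by decide) (by decide)
    (by decide)
  have key := dt_config i j k
  generalize dt i (0 : Fin 7) 1 2 3 = x at *
  generalize dt j (0 : Fin 7) 1 4 5 = y at *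
  generalize dt k (0 : Fin 7) 2 4 6 = w at *
  obtain ⟨K, hK⟩ : ∃ K : Subgroup (Perm (Fin 7)), ∀ z, z ∈ K ↔ viaEmbeddingHom f z ∈ H :=
    ⟨H.comap (viaEmbeddingHom f), fun _ => Iff.rfl⟩
  rw [← hK] at mx my mw
  have hz : x * y * w ∈ K := K.mul_mem (K.mul_mem mx my) mw
  rcases key with h | h | h | ⟨⟨u, v⟩, huv, huu, hvv, h4, hs, hne⟩
  · exact hH.not_isCycle_viaEmbedding hn f ((hK _).1 hz) Nat.prime_three (by norm_num) h.1 h.2.2 h.2.1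
  · exact hH.not_isCycle_viaEmbedding hn f ((hK _).1 hz) Nat.prime_five (by norm_num) h.1 h.2.2 h.2.1
  · exact hH.not_isCycle_viaEmbedding hn f ((hK _).1 hz) Nat.prime_seven (by norm_num) h.1 h.2.2 h.2.1
  · have huvK : u ∈ K ∧ v ∈ K := by
      simp only [List.mem_cons, Prod.mk.injEq, List.not_mem_nil, or_false] at huv
      rcases huv with h | h | h | h | h | h | h | h | h | h <;> rw [h.1, h.2] <;>
        constructor <;> (repeat' apply K.mul_mem) <;> assumption
    refine hH.not_isV4Supp hn (A := (viaEmbeddingHom f u).support)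
      ⟨by rw [card_support_viaEmbedding, h4], _, (hK _).1 huvK.1, _, (hK _).1 huvK.2, ?_, ?_, ?_, rfl,
        support_viaEmbedding_congr f hs⟩
    · exact fun e => hne (viaEmbeddingHom_injective f e)
    · dsimp only at huu; rw [← map_mul, huu, map_one]
    · dsimp only at hvv; rw [← map_mul, hvv, map_one]

/-- A primitive group of degree at least 13 not containing the alternating group has minimal degree
greater than 5: a power of prime order of an element of small support is a transposition, a cycle
of length 3 or 5, or a double transposition. -/
theorem IsSmallPrim.five_lt_card_support {H : Subgroup (Perm (Fin n))} (hH : IsSmallPrim H)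
    (hn : 13 ≤ n) {x : Perm (Fin n)} (hx : x ∈ H) (hx1 : x ≠ 1) : 5 < x.support.card := by
  by_contra! hs
  have ho : orderOf x ≠ 1 := by rwa [Ne, orderOf_eq_one_iff]
  obtain ⟨p, hp, hpd⟩ := Nat.exists_prime_and_dvd ho
  obtain ⟨m, hm⟩ := hpd
  have := Fact.mk hp
  set y := x ^ m with hy
  have hyH : y ∈ H := H.pow_mem hx m
  have hm0 : m ≠ 0 := by rintro rfl; rw [mul_zero] at hm; exact (orderOf_pos x).ne' hm
  have hyo : orderOf y = p := by
    rw [hy, orderOf_pow_of_dvd hm0 ⟨p, by rw [hm, mul_comm]⟩, hm,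
      Nat.mul_div_cancel _ (Nat.pos_of_ne_zero hm0)]
  have hys : y.support.card ≤ 5 := (Finset.card_le_card (support_pow_le x m)).trans hs
  have hy1 : y ≠ 1 := fun h => by rw [h, orderOf_one] at hyo; exact hp.one_lt.ne hyo
  by_cases h2p : y.support.card < 2 * p
  · have hc : y.IsCycle := isCycle_of_prime_order (by rwa [hyo]) (by rwa [hyo])
    have hcard : y.support.card = p := by rw [← hc.orderOf, hyo]
    rcases hp.two_le.eq_or_lt with h | h
    · exact hH.not_isSwap hyH (card_support_eq_two.1 (by rw [hcard, h]))
    · exact hH.not_isCycle hyH hc (by rwa [hcard]) (by omega) (by omega) (by omega)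
  · have hp2 : p = 2 := by
      have := hp.two_le; omega
    subst hp2
    have hyy : y * y = 1 := by rw [← pow_two, ← hyo, pow_orderOf_eq_one]
    have hev : 2 ∣ y.support.card := by
      have := pow_orderOf_eq_one y
      have := Equiv.Perm.two_dvd_card_support (σ := y) (by rw [pow_two, hyy])
      exact this
    exact hH.not_isDTSupp hn ⟨by omega, y, hyH, hyy, rfl⟩

/-! ### Counting the conjugates containing a permutation -/

theorem mem_conjSub {G : Type*} [Group G] {g : G} {H : Subgroup G} {x : G} :
    x ∈ conjSub g H ↔ g⁻¹ * x * g ∈ H := by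
  simp only [conjSub, Subgroup.mem_map, MulEquiv.coe_toMonoidHom, MulAut.conj_apply]
  constructor
  · rintro ⟨y, hy, rfl⟩
    simpa [mul_assoc] using hy
  · intro h
    exact ⟨_, h, by group⟩

open Classical in
/-- The number of even permutations `g` with `x ∈ g H g⁻¹`. -/
noncomputable def numConj (H : Subgroup (Perm (Fin n))) (x : Perm (Fin n)) : ℕ :=
  (Finset.univ.filter fun g : alternatingGroup (Fin n) => x ∈ conjSub (g : Perm (Fin n)) H).card

/-- `numConj H` is invariant under even conjugation. -/
theorem numConj_conj (H : Subgroup (Perm (Fin n))) (x : Perm (Fin n)) {h : Perm (Fin n)}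
    (hh : h ∈ alternatingGroup (Fin n)) : numConj H (h * x * h⁻¹) = numConj H x := by
  classical
  unfold numConj
  refine Finset.card_bij' (fun g _ => ⟨h, hh⟩⁻¹ * g) (fun g _ => ⟨h, hh⟩ * g) ?_ ?_ ?_ ?_
  · intro g hg
    simp only [Finset.mem_filter, Finset.mem_univ, true_and, mem_conjSub] at hg ⊢
    convert hg using 1
    simp only [Subgroup.coe_mul, Subgroup.coe_inv]; group
  · intro g hg
    simp only [Finset.mem_filter, Finset.mem_univ, true_and, mem_conjSub] at hg ⊢
    convert hg using 1
    simp only [Subgroup.coe_mul]; group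
  · intro g _; simp
  · intro g _; simp

theorem numConj_eq_zero {H : Subgroup (Perm (Fin n))} (hH : IsSmallPrim H) (hn : 13 ≤ n)
    {x : Perm (Fin n)} (hx : x ≠ 1) (hs : x.support.card ≤ 5) : numConj H x = 0 := by
  classical
  rw [numConj, Finset.card_eq_zero, Finset.filter_eq_empty_iff]
  intro g _ hg
  rw [mem_conjSub] at hg
  have h := hH.five_lt_card_support hn hg (fun e => hx ?_)
  · have : ((g : Perm (Fin n))⁻¹ * x * g).support.card = x.support.card := by
      have := card_support_conj (σ := (g : Perm (Fin n))⁻¹) (τ := x)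
      rwa [inv_inv] at this
    omega
  · have h2 : x = g * ((g : Perm (Fin n))⁻¹ * x * g) * (g : Perm (Fin n))⁻¹ := by group
    rw [h2, e]; group

/-- A Bonferroni-type inequality: a conjugate of `H` containing `f` of the elements `x i` contains
`f * (f - 1)` of their ordered quotients, and `2 * f ≤ 2 + f * (f - 1)`. -/
theorem two_mul_sum_numConj_le {ι : Type*} [DecidableEq ι] (H : Subgroup (Perm (Fin n)))
    (I : Finset ι) (x : ι → Perm (Fin n)) :
    2 * ∑ i ∈ I, numConj H (x i) ≤ 2 * Nat.card (alternatingGroup (Fin n)) +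
      ∑ p ∈ I.offDiag, numConj H (x p.1 * (x p.2)⁻¹) := by
  classical
  simp only [numConj, Finset.card_filter]
  rw [Finset.sum_comm, Finset.sum_comm (s := I.offDiag), Nat.card_eq_fintype_card,
    ← Finset.card_univ, Finset.card_eq_sum_ones, Finset.mul_sum, Finset.mul_sum,
    ← Finset.sum_add_distrib]
  refine Finset.sum_le_sum fun g _ => ?_
  rw [← Finset.card_filter, ← Finset.card_filter]
  set F := I.filter fun i => x i ∈ conjSub (g : Perm (Fin n)) H with hF
  have h1 : F.offDiag ⊆ I.offDiag.filter
      fun p => x p.1 * (x p.2)⁻¹ ∈ conjSub (g : Perm (Fin n)) H := by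
    intro p hp
    simp only [Finset.mem_offDiag, hF, Finset.mem_filter] at hp ⊢
    exact ⟨⟨hp.1.1, hp.2.1.1, hp.2.2⟩, Subgroup.mul_mem _ hp.1.2 (Subgroup.inv_mem _ hp.2.1.2)⟩
  have h2 := Finset.card_le_card h1
  rw [Finset.offDiag_card] at h2
  have h3 : 2 * F.card ≤ 2 + (F.card * F.card - F.card) := by
    rcases F.card with _ | _ | _ | m
    · simp
    · simp
    · simp
    · have : (m + 3) * (m + 3) - (m + 3) = (m + 3) * (m + 2) := by
        rw [Nat.sub_eq_of_eq_add]; ring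
      have : 2 * (m + 1 + 1 + 1) ≤ (m + 3) * (m + 2) := by nlinarith
      simp only [Nat.add_assoc, Nat.reduceAdd] at *
      omega
  omega

/-- The alternating group is `(n - 2)`-transitive. -/
theorem exists_even_extending {k : ℕ} (hk : k + 2 ≤ n) (v w : Fin k → Fin n)
    (hv : Function.Injective v) (hw : Function.Injective w) :
    ∃ σ ∈ alternatingGroup (Fin n), ∀ i, σ (v i) = w i := by
  have h := alternatingGroup.isMultiplyPretransitive (Fin n)
  have h' : MulAction.IsMultiplyPretransitive (alternatingGroup (Fin n)) (Fin n) k :=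
    MulAction.isMultiplyPretransitive_of_le (n := Nat.card (Fin n) - 2) (by simp; omega) (by simp)
  rw [MulAction.isMultiplyPretransitive_iff] at h'
  obtain ⟨σ, hσ⟩ := h' ⟨v, hv⟩ ⟨w, hw⟩
  exact ⟨σ, σ.2, fun i => DFunLike.congr_fun hσ i⟩

/-- `x` is a product of two disjoint three-cycles. -/
def Is33 (x : Perm (Fin n)) : Prop :=
  ∃ v : Fin 6 → Fin n, Function.Injective v ∧ x (v 0) = v 1 ∧ x (v 1) = v 2 ∧ x (v 2) = v 0 ∧
    x (v 3) = v 4 ∧ x (v 4) = v 5 ∧ x (v 5) = v 3 ∧ ∀ p, p ∉ Set.range v → x p = p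

theorem Is33.conj {x : Perm (Fin n)} (hx : Is33 x) (g : Perm (Fin n)) : Is33 (g * x * g⁻¹) := by
  obtain ⟨v, hv, h0, h1, h2, h3, h4, h5, h⟩ := hx
  refine ⟨g ∘ v, g.injective.comp hv, ?_, ?_, ?_, ?_, ?_, ?_, fun p hp => ?_⟩
  any_goals simp only [Function.comp_apply, Perm.mul_apply, perm_inv_app, h0, h1, h2, h3, h4, h5]
  rw [h, perm_app_inv]
  rintro ⟨i, hi⟩
  exact hp ⟨i, by rw [Function.comp_apply, hi, perm_app_inv]⟩

/-- If `x = (v₀ v₁ v₂)(v₃ v₄ v₅)`, the `(n - 4)(n - 5)` even conjugates `(v₀ b c)(v₃ v₄ v₅)` of `x` have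
quotients with at most five moved points, so a conjugate of `H` contains at most one of them. -/
theorem Is33.numConj_le {H : Subgroup (Perm (Fin n))} (hH : IsSmallPrim H) (hn : 13 ≤ n)
    {x : Perm (Fin n)} (hx : Is33 x) :
    (n - 4) * (n - 5) * numConj H x ≤ Nat.card (alternatingGroup (Fin n)) := by
  classical
  obtain ⟨v, hv, h0, h1, h2, h3, h4, h5, h⟩ := hx
  set D : Finset (Fin n) := {v 0, v 3, v 4, v 5} with hD
  have hDc : D.card = 4 := by
    have : D = ({0, 3, 4, 5} : Finset (Fin 6)).image v := by simp [hD, Finset.image_insert]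
    rw [this, Finset.card_image_of_injective _ hv]; rfl
  set T : Finset (Fin n) := Dᶜ with hT
  have hTc : T.card = n - 4 := by rw [hT, Finset.card_compl, hDc, Fintype.card_fin]
  have hσ : ∀ p : Fin n × Fin n, ∃ σ ∈ alternatingGroup (Fin n), p ∈ T.offDiag →
      σ (v 0) = v 0 ∧ σ (v 1) = p.1 ∧ σ (v 2) = p.2 ∧ σ (v 3) = v 3 ∧ σ (v 4) = v 4 ∧
        σ (v 5) = v 5 := by
    intro p
    by_cases hp : p ∈ T.offDiag
    · simp only [Finset.mem_offDiag, hT, hD, Finset.mem_compl, Finset.mem_insert,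
        Finset.mem_singleton, not_or] at hp
      obtain ⟨σ, hσ, hσ'⟩ := exists_even_extending (by omega) v ![v 0, p.1, p.2, v 3, v 4, v 5] hv (by
        have hne : ∀ i j, i ≠ j → v i ≠ v j := fun i j hij e => hij (hv e)
        have e1 := hne 0 3 (by decide)
        have e2 := hne 0 4 (by decide)
        have e3 := hne 0 5 (by decide)
        have e4 := hne 3 4 (by decide)
        have e5 := hne 3 5 (by decide)
        have e6 := hne 4 5 (by decide)
        obtain ⟨⟨a1, a2, a3, a4⟩, ⟨b1, b2, b3, b4⟩, hpp⟩ := hp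
        rw [← List.nodup_ofFn]
        simp only [List.ofFn_succ, List.ofFn_zero, List.nodup_cons, List.mem_cons, not_or,
          List.not_mem_nil, not_false_eq_true, List.nodup_nil, and_true, Fin.isValue,
          Matrix.cons_val_zero, Matrix.cons_val_succ]
        exact ⟨⟨Ne.symm a1, Ne.symm b1, e1, e2, e3⟩, ⟨hpp, a2, a3, a4⟩, ⟨b2, b3, b4⟩, ⟨e4, e5⟩, e6⟩)
      refine ⟨σ, hσ, fun _ => ⟨hσ' 0, hσ' 1, hσ' 2, hσ' 3, hσ' 4, hσ' 5⟩⟩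
    · exact ⟨1, Subgroup.one_mem _, fun h => absurd h hp⟩
  choose σ hσA hσ using hσ
  have hcnt := two_mul_sum_numConj_le H T.offDiag (fun p => σ p * x * (σ p)⁻¹)
  have hz : ∑ p ∈ T.offDiag.offDiag, numConj H ((σ p.1 * x * (σ p.1)⁻¹) *
      (σ p.2 * x * (σ p.2)⁻¹)⁻¹) = 0 := by
    refine Finset.sum_eq_zero fun p hp => ?_
    obtain ⟨hp1, hp2, hne⟩ := Finset.mem_offDiag.1 hp
    have key : ∀ q ∈ T.offDiag, (σ q * x * (σ q)⁻¹) (v 0) = q.1 ∧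
        (σ q * x * (σ q)⁻¹) q.1 = q.2 ∧
        (σ q * x * (σ q)⁻¹) (v 3) = v 4 ∧ (σ q * x * (σ q)⁻¹) (v 4) = v 5 ∧
        (σ q * x * (σ q)⁻¹) (v 5) = v 3 ∧
        ∀ r, r ≠ v 0 → r ≠ q.1 → r ≠ q.2 → r ≠ v 3 → r ≠ v 4 → r ≠ v 5 →
          (σ q * x * (σ q)⁻¹) r = r := by
      intro q hq
      obtain ⟨e0, e1, e2, e3, e4, e5⟩ := hσ q hq
      have f0 : (σ q)⁻¹ (v 0) = v 0 := by rw [inv_eq_iff_eq, e0]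
      have f1 : (σ q)⁻¹ q.1 = v 1 := by rw [inv_eq_iff_eq, e1]
      have f3 : (σ q)⁻¹ (v 3) = v 3 := by rw [inv_eq_iff_eq, e3]
      have f4 : (σ q)⁻¹ (v 4) = v 4 := by rw [inv_eq_iff_eq, e4]
      have f5 : (σ q)⁻¹ (v 5) = v 5 := by rw [inv_eq_iff_eq, e5]
      simp only [Perm.mul_apply, f0, f1, f3, f4, f5, h0, h1, h3, h4, h5, e1, e2, e3, e4, e5,
        true_and]
      intro r r0 r1 r2 r3 r4 r5
      rw [h, perm_app_inv]
      rintro ⟨i, hi⟩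
      rw [eq_inv_iff_eq] at hi
      fin_cases i
      · exact r0 (hi.symm.trans e0)
      · exact r1 (hi.symm.trans e1)
      · exact r2 (hi.symm.trans e2)
      · exact r3 (hi.symm.trans e3)
      · exact r4 (hi.symm.trans e4)
      · exact r5 (hi.symm.trans e5)
    obtain ⟨a0, a1, a3, a4, a5, ar⟩ := key _ hp1
    obtain ⟨b0, b1, b3, b4, b5, br⟩ := key _ hp2
    generalize σ p.1 * x * (σ p.1)⁻¹ = y at *
    generalize σ p.2 * x * (σ p.2)⁻¹ = z at *
    refine numConj_eq_zero hH hn ?_ ?_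
    · intro e
      rw [mul_inv_eq_one] at e
      subst e
      apply hne
      have e1 := a0.symm.trans b0
      rw [e1] at a1
      exact Prod.ext e1 (a1.symm.trans b1)
    · refine (Finset.card_le_card (t := {v 0, p.1.1, p.1.2, p.2.1, p.2.2}) ?_).trans
        Finset.card_le_five
      intro r
      rw [mem_support]
      contrapose!
      simp only [Finset.mem_insert, Finset.mem_singleton, not_or]
      rintro ⟨r0, r1, r2, r3, r4⟩
      rw [Perm.mul_apply]
      by_cases q3 : r = v 3
      · rw [q3, inv_eq_iff_eq.2 b5.symm, a5]
      by_cases q4 : r = v 4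
      · rw [q4, inv_eq_iff_eq.2 b3.symm, a3]
      by_cases q5 : r = v 5
      · rw [q5, inv_eq_iff_eq.2 b4.symm, a4]
      rw [inv_eq_iff_eq.2 (br r r0 r3 r4 q3 q4 q5).symm, ar r r0 r1 r2 q3 q4 q5]
  rw [hz] at hcnt
  simp only [numConj_conj H x (hσA _), Finset.sum_const, smul_eq_mul, Finset.offDiag_card, hTc]
    at hcnt
  have : (n - 4) * (n - 4) - (n - 4) = (n - 4) * (n - 5) := by
    obtain ⟨m, rfl⟩ : ∃ m, n = m + 5 := ⟨n - 5, by omega⟩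
    rw [show m + 5 - 4 = m + 1 by omega, show m + 5 - 5 = m by omega]
    rw [Nat.sub_eq_of_eq_add]; ring
  rw [this] at hcnt
  omega

/-! ### The averaging bound -/

/-- The commutator of a three-cycle on `a, b, b'` with `x` is a product of two disjoint three-cycles
when the points `a, b, b'` and their images under `x` are six distinct points. -/
theorem is33_of_six {x : Perm (Fin n)} {a b b' : Fin n} (hab : a ≠ b) (hab' : a ≠ b') (hbb : b ≠ b')
    (h1 : x a ≠ a) (h2 : x a ≠ b) (h3 : x a ≠ b') (h4 : x b ≠ a) (h5 : x b ≠ b) (h6 : x b ≠ b')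
    (h7 : x b' ≠ a) (h8 : x b' ≠ b) (h9 : x b' ≠ b') :
    Is33 (swap a b' * swap a b * x * swap a b * swap a b' * x⁻¹) := by
  have n1 := x.injective.ne hab
  have n2 := x.injective.ne hab'
  have n3 := x.injective.ne hbb
  refine ⟨![a, b, b', x a, x b', x b], ?_, ?_⟩
  · rw [← List.nodup_ofFn]
    simp only [List.ofFn_succ, List.ofFn_zero, List.nodup_cons, List.mem_cons, not_or,
      List.not_mem_nil, not_false_eq_true, List.nodup_nil, and_true, Fin.isValue,
      Matrix.cons_val_zero, Matrix.cons_val_succ]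
    exact ⟨⟨hab, hab', h1.symm, h7.symm, h4.symm⟩, ⟨hbb, h2.symm, h8.symm, h5.symm⟩,
      ⟨h3.symm, h9.symm, h6.symm⟩, ⟨n2, n1⟩, n3.symm⟩
  change _ = b ∧ _ = b' ∧ _ = a ∧ _ = x b' ∧ _ = x b ∧ _ = x a ∧ _
  change (swap a b' * swap a b * x * swap a b * swap a b' * x⁻¹) a = b ∧
    (swap a b' * swap a b * x * swap a b * swap a b' * x⁻¹) b = b' ∧
    (swap a b' * swap a b * x * swap a b * swap a b' * x⁻¹) b' = a ∧
    (swap a b' * swap a b * x * swap a b * swap a b' * x⁻¹) (x a) = x b' ∧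
    (swap a b' * swap a b * x * swap a b * swap a b' * x⁻¹) (x b') = x b ∧
    (swap a b' * swap a b * x * swap a b * swap a b' * x⁻¹) (x b) = x a ∧ _
  have i1 : ∀ p q, x⁻¹ p = q ↔ p = x q := fun p q => inv_eq_iff_eq
  have key : ∀ p, p ≠ x a → p ≠ x b → p ≠ x b' →
      (swap a b' * swap a b * x * swap a b * swap a b' * x⁻¹) p = swap a b' (swap a b p) := by
    intro p p1 p2 p3
    simp only [Perm.mul_apply]
    have q1 : x⁻¹ p ≠ a := fun h => p1 ((i1 _ _).1 h)
    have q2 : x⁻¹ p ≠ b := fun h => p2 ((i1 _ _).1 h)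
    have q3 : x⁻¹ p ≠ b' := fun h => p3 ((i1 _ _).1 h)
    rw [swap_apply_of_ne_of_ne q1 q3, swap_apply_of_ne_of_ne q1 q2, perm_app_inv]
  refine ⟨?_, ?_, ?_, ?_, ?_, ?_, ?_⟩
  · rw [key _ h1.symm h4.symm h7.symm, swap_apply_left, swap_apply_of_ne_of_ne hab.symm hbb]
  · rw [key _ h2.symm h5.symm h8.symm, swap_apply_right, swap_apply_left]
  · rw [key _ h3.symm h6.symm h9.symm, swap_apply_of_ne_of_ne hab'.symm hbb.symm, swap_apply_right]
  · simp only [Perm.mul_apply, perm_inv_app]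
    rw [swap_apply_left, swap_apply_of_ne_of_ne hab'.symm hbb.symm,
      swap_apply_of_ne_of_ne h7 h8, swap_apply_of_ne_of_ne h7 h9]
  · simp only [Perm.mul_apply, perm_inv_app]
    rw [swap_apply_right, swap_apply_left,
      swap_apply_of_ne_of_ne h4 h5, swap_apply_of_ne_of_ne h4 h6]
  · simp only [Perm.mul_apply, perm_inv_app]
    rw [swap_apply_of_ne_of_ne hab.symm hbb, swap_apply_right,
      swap_apply_of_ne_of_ne h1 h2, swap_apply_of_ne_of_ne h1 h3]
  · intro p hp
    have hp' : ∀ i, p ≠ ![a, b, b', x a, x b', x b] i := fun i h => hp ⟨i, h.symm⟩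
    have r0 : p ≠ a := hp' 0
    have r1 : p ≠ b := hp' 1
    have r2 : p ≠ b' := hp' 2
    rw [key p (hp' 3) (hp' 5) (hp' 4), swap_apply_of_ne_of_ne r0 r1, swap_apply_of_ne_of_ne r0 r2]

theorem support_commutator_subset {x : Perm (Fin n)} {a b b' : Fin n} :
    (swap a b' * swap a b * x * swap a b * swap a b' * x⁻¹).support ⊆
      {a, b, b', x a, x b, x b'} := by
  intro p
  rw [mem_support]
  contrapose!
  simp only [Finset.mem_insert, Finset.mem_singleton, not_or]
  rintro ⟨p1, p2, p3, p4, p5, p6⟩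
  have i1 : ∀ p q, x⁻¹ p = q ↔ p = x q := fun p q => inv_eq_iff_eq
  simp only [Perm.mul_apply]
  have q1 : x⁻¹ p ≠ a := fun h => p4 ((i1 _ _).1 h)
  have q2 : x⁻¹ p ≠ b := fun h => p5 ((i1 _ _).1 h)
  have q3 : x⁻¹ p ≠ b' := fun h => p6 ((i1 _ _).1 h)
  rw [swap_apply_of_ne_of_ne q1 q3, swap_apply_of_ne_of_ne q1 q2, perm_app_inv,
    swap_apply_of_ne_of_ne p1 p2, swap_apply_of_ne_of_ne p1 p3]

theorem card_insert_of_mem_lt {s : List (Fin n)} (hs : ¬ s.Nodup) : s.toFinset.card < s.length := by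
  refine lt_of_le_of_ne (List.toFinset_card_le s) fun h => hs ?_
  rw [← Multiset.coe_nodup]
  exact Multiset.toFinset_card_eq_card_iff_nodup.1 h

/-- For `x a ≠ a`, the `n - 2` conjugates of `x` by `swap a b`, with `b` different from `a` and `x a`,
are conjugate to each other under the alternating group. Their quotients are nontrivial with at
most five moved points, or products of two disjoint three-cycles, so that `two_mul_sum_numConj_le`
applies. -/
theorem numConj_conj_swap_le {H : Subgroup (Perm (Fin n))} (hH : IsSmallPrim H) (hn : 13 ≤ n)
    {x : Perm (Fin n)} (hx : x ≠ 1) {s : Perm (Fin n)} (hs : s.IsSwap) :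
    (n - 1) * numConj H (s * x * s⁻¹) ≤ 2 * Nat.card (alternatingGroup (Fin n)) := by
  classical
  obtain ⟨a, ha⟩ : ∃ a, x a ≠ a := by
    by_contra! h
    exact hx (Equiv.ext h)
  set T : Finset (Fin n) := {a, x a}ᶜ with hT
  have hTc : T.card = n - 2 := by
    rw [hT, Finset.card_compl, Finset.card_pair ha.symm, Fintype.card_fin]
  have hmem : ∀ b ∈ T, b ≠ a ∧ b ≠ x a := fun b hb => by simpa [hT] using hb
  have hcnt := two_mul_sum_numConj_le H T fun b => swap a b * x * (swap a b)⁻¹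
  have hconst : ∀ b ∈ T, numConj H (swap a b * x * (swap a b)⁻¹) = numConj H (s * x * s⁻¹) := by
    intro b hb
    have hsw : (swap a b).IsSwap := ⟨a, b, (hmem b hb).1.symm, rfl⟩
    have := numConj_conj H (s * x * s⁻¹) (h := swap a b * s⁻¹) (by
      rw [mem_alternatingGroup, Perm.sign_mul, Perm.sign_inv, hsw.sign_eq, hs.sign_eq]; rfl)
    rw [← this]
    congr 1
    group
  have hquot : ∀ p ∈ T.offDiag, (n - 4) * (n - 5) * numConj H ((swap a p.1 * x * (swap a p.1)⁻¹) *
      (swap a p.2 * x * (swap a p.2)⁻¹)⁻¹) ≤ Nat.card (alternatingGroup (Fin n)) := by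
    rintro ⟨b, b'⟩ hp
    obtain ⟨hb, hb', hbb⟩ := Finset.mem_offDiag.1 hp
    obtain ⟨b1, b2⟩ := hmem b hb
    obtain ⟨b1', b2'⟩ := hmem b' hb'
    dsimp only at *
    have heq : (swap a b * x * (swap a b)⁻¹) * (swap a b' * x * (swap a b')⁻¹)⁻¹ =
        swap a b' * (swap a b' * swap a b * x * swap a b * swap a b' * x⁻¹) * (swap a b')⁻¹ := by
      simp only [swap_inv, mul_inv_rev, mul_assoc, swap_mul_self_mul]
    set q := swap a b' * swap a b * x * swap a b * swap a b' * x⁻¹ with hq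
    rw [heq]
    by_cases hd : [a, b, b', x a, x b, x b'].Nodup
    · refine Is33.numConj_le hH hn (Is33.conj ?_ _)
      simp only [List.nodup_cons, List.mem_cons, not_or, List.not_mem_nil, not_false_eq_true,
        List.nodup_nil, and_true] at hd
      obtain ⟨⟨-, -, d1, d2, d3⟩, ⟨-, d4, d5, d6⟩, ⟨d7, d8, d9⟩, -, -⟩ := hd
      exact is33_of_six b1.symm b1'.symm hbb ha b2.symm b2'.symm (Ne.symm d2) (Ne.symm d5) (Ne.symm d8)
        (Ne.symm d3) (Ne.symm d6) (Ne.symm d9)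
    · rw [numConj_eq_zero hH hn]
      · simp
      · rw [← heq]
        intro e
        rw [mul_inv_eq_one] at e
        have e' := DFunLike.congr_fun e b
        simp only [swap_inv, Perm.mul_apply, swap_apply_right] at e'
        rw [swap_apply_of_ne_of_ne ha b2.symm, swap_apply_of_ne_of_ne b1 hbb] at e'
        have e'' := congrArg (swap a b') e'
        rw [swap_apply_self, swap_apply_of_ne_of_ne ha b2'.symm] at e''
        exact b1 (x.injective e''.symm)
      · rw [card_support_conj]
        have h1 := Finset.card_le_card (support_commutator_subset (x := x) (a := a) (b := b)
          (b' := b'))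
        rw [← hq] at h1
        have h2 := card_insert_of_mem_lt hd
        simp only [List.toFinset_cons, List.toFinset_nil, List.length_cons, List.length_nil] at h2
        have h3 : (insert a (insert b (insert b' (insert (x a) (insert (x b) (insert (x b') ∅))))))
          = ({a, b, b', x a, x b, x b'} : Finset (Fin n)) := rfl
        rw [h3] at h2
        omega
  rw [Finset.sum_congr rfl hconst, Finset.sum_const, hTc, smul_eq_mul] at hcnt
  have hsum := Finset.sum_le_card_nsmul _ _ _ hquot
  rw [← Finset.mul_sum, Finset.offDiag_card, hTc, smul_eq_mul] at hsum
  generalize numConj H (s * x * s⁻¹) = N at *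
  generalize Nat.card (alternatingGroup (Fin n)) = A at *
  generalize (∑ i ∈ T.offDiag, _ : ℕ) = Q at *
  obtain ⟨m, rfl⟩ : ∃ m, n = m + 13 := ⟨n - 13, by omega⟩
  rw [show m + 13 - 2 = m + 11 by omega] at *
  rw [show m + 13 - 4 = m + 9 by omega, show m + 13 - 5 = m + 8 by omega,
    show (m + 11) * (m + 11) - (m + 11) = (m + 11) * (m + 10) by
      rw [Nat.sub_eq_of_eq_add]; ring] at hsum
  rw [show m + 13 - 1 = m + 12 by omega]
  have h1 : (m + 9) * (m + 8) * (2 * ((m + 11) * N)) ≤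
      (m + 9) * (m + 8) * (2 * A) + (m + 11) * (m + 10) * A := by
    calc _ ≤ (m + 9) * (m + 8) * (2 * A + Q) := Nat.mul_le_mul_left _ hcnt
      _ ≤ _ := by rw [mul_add]; omega
  by_contra! hcon
  have h2 : 2 * A + 1 ≤ (m + 12) * N := hcon
  nlinarith [Nat.mul_le_mul_left ((m + 9) * (m + 8) * 2 * (m + 11)) h2,
    Nat.mul_le_mul_left (m + 12) h1, Nat.zero_le A, Nat.zero_le (m * A), Nat.zero_le (m ^ 2 * A),
    Nat.zero_le (m ^ 3 * A), Nat.zero_le m, Nat.zero_le (m^2), Nat.zero_le (m^3)]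

/-- A nontrivial permutation lies in a random even conjugate of `H` with probability at most
`2 / (n - 1)`. -/
theorem numConj_le {H : Subgroup (Perm (Fin n))} (hH : IsSmallPrim H) (hn : 13 ≤ n)
    {x : Perm (Fin n)} (hx : x ≠ 1) :
    (n - 1) * numConj H x ≤ 2 * Nat.card (alternatingGroup (Fin n)) := by
  have hne : (⟨0, by omega⟩ : Fin n) ≠ ⟨1, by omega⟩ := by simp
  have hs : (swap (⟨0, by omega⟩ : Fin n) ⟨1, by omega⟩).IsSwap := ⟨_, _, hne, rfl⟩
  set s := swap (⟨0, by omega⟩ : Fin n) ⟨1, by omega⟩ with hs'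
  have h := numConj_conj_swap_le hH hn (x := s⁻¹ * x * s) (fun e => hx ?_) hs
  · rwa [show s * (s⁻¹ * x * s) * s⁻¹ = x by group] at h
  · rw [show x = s * (s⁻¹ * x * s) * s⁻¹ by group, e]; group

/-- Averaging over the even conjugates of `H`: some conjugate meets `K` in few nontrivial elements. -/
theorem exists_conj_card_inf_le {H : Subgroup (Perm (Fin n))} (hH : IsSmallPrim H) (hn : 13 ≤ n)
    (K : Subgroup (Perm (Fin n))) : ∃ g ∈ alternatingGroup (Fin n),
    (n - 1) * (Nat.card (K ⊓ conjSub g H : Subgroup _) - 1) ≤ 2 * (Nat.card K - 1) := by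
  classical
  have hcard : ∀ L : Subgroup (Perm (Fin n)),
      Nat.card L - 1 = (Finset.univ.filter fun x : Perm (Fin n) => x ∈ L ∧ x ≠ 1).card := by
    intro L
    have h1 : (Finset.univ.filter fun x : Perm (Fin n) => x ∈ L ∧ x ≠ 1) =
        (Finset.univ.filter fun x : Perm (Fin n) => x ∈ L).erase 1 := by
      ext x; simp [and_comm]
    rw [h1, Finset.card_erase_of_mem (by simp [L.one_mem]), Nat.card_eq_fintype_card,
      Fintype.card_subtype]
  set B := Finset.univ.filter fun x : Perm (Fin n) => x ∈ K ∧ x ≠ 1 with hB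
  have hsum : ∑ g : alternatingGroup (Fin n),
      (n - 1) * (Nat.card (K ⊓ conjSub (g : Perm (Fin n)) H : Subgroup _) - 1) ≤
      ∑ g : alternatingGroup (Fin n), 2 * (Nat.card K - 1) := by
    have e1 : ∀ g : alternatingGroup (Fin n),
        (Nat.card (K ⊓ conjSub (g : Perm (Fin n)) H : Subgroup _) - 1) =
        ∑ x ∈ B, if x ∈ conjSub (g : Perm (Fin n)) H then 1 else 0 := by
      intro g
      rw [hcard, ← Finset.card_filter, hB, Finset.filter_filter]
      congr 1
      ext x
      simp only [Finset.mem_filter, Subgroup.mem_inf]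
      tauto
    simp only [e1]
    rw [← Finset.mul_sum, Finset.sum_comm, Finset.mul_sum]
    have e2 : ∀ x ∈ B, (n - 1) * ∑ g : alternatingGroup (Fin n),
        (if x ∈ conjSub (g : Perm (Fin n)) H then 1 else 0) ≤
          2 * Nat.card (alternatingGroup (Fin n)) := by
      intro x hx
      rw [← Finset.card_filter]
      exact numConj_le hH hn (Finset.mem_filter.1 hx).2.2
    refine (Finset.sum_le_card_nsmul _ _ _ e2).trans ?_
    rw [Finset.sum_const, Finset.card_univ, ← Nat.card_eq_fintype_card, hcard K, smul_eq_mul,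
      smul_eq_mul]
    apply le_of_eq
    ring
  obtain ⟨g, -, hg⟩ := Finset.exists_le_of_sum_le Finset.univ_nonempty hsum
  exact ⟨g, g.2, hg⟩

/-! ### Bochert's bound -/

/-- The argument of Bochert: `H` meets trivially the symmetric group on some set of `k` points, for
every `k ≤ (n + 1) / 2`. -/
theorem IsSmallPrim.exists_trivial_inter {H : Subgroup (Perm (Fin n))} (hH : IsSmallPrim H) :
    ∀ k, 2 * k ≤ n + 1 → ∃ A : Finset (Fin n), A.card = k ∧
      ∀ x ∈ H, (∀ p, p ∉ A → x p = p) → x = 1 := by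
  intro k
  induction k with
  | zero => exact fun _ => ⟨∅, rfl, fun x _ hx => Equiv.ext fun p => hx p (by simp)⟩
  | succ k ih =>
    intro hk
    obtain ⟨A, hA, hAx⟩ := ih (by omega)
    obtain ⟨A', hA', hA'c⟩ : ∃ A' ⊆ Aᶜ, A'.card = k + 1 :=
      Finset.exists_subset_card_eq (by rw [Finset.card_compl, Fintype.card_fin]; omega)
    by_contra! hcon
    obtain ⟨y, hy, hyA, hy1⟩ := hcon A' hA'c
    obtain ⟨c, hc⟩ : ∃ c, y c ≠ c := by
      by_contra! h
      exact hy1 (Equiv.ext h)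
    have hcA' : c ∈ A' := by
      by_contra h
      exact hc (hyA c h)
    have hcA : c ∉ A := by simpa using hA' hcA'
    obtain ⟨x, hx, hxA, hx1⟩ := hcon (insert c A) (by rw [Finset.card_insert_of_notMem hcA, hA])
    have hxc : x c ≠ c := by
      intro h
      refine hx1 (hAx x hx fun p hp => ?_)
      by_cases hpc : p = c
      · rw [hpc, h]
      · exact hxA p (by simp [hpc, hp])
    refine hH.not_meet hx hy hxc hc fun p hp => ?_
    by_cases hpA : p ∈ A
    · exact Or.inr (hyA p fun h => (by simpa using hA' h : p ∉ A) hpA)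
    · exact Or.inl (hxA p (by simp [hp, hpA]))

/-- If `L ≤ Y`, and `Y` contains the symmetric group on `A`, which meets `L` trivially, then the index
of `L` in `Y` is at least `|A|!`. -/
theorem card_mul_factorial_le {L Y : Subgroup (Perm (Fin n))} (hLY : L ≤ Y) (A : Finset (Fin n))
    (hL : ∀ x ∈ L, (∀ p, p ∉ A → x p = p) → x = 1)
    (hY : ∀ x : Perm (Fin n), (∀ p, p ∉ A → x p = p) → x ∈ Y) :
    Nat.card L * A.card.factorial ≤ Nat.card Y := by
  classical
  have hfix : ∀ s : Perm {x // x ∈ A}, ∀ p, p ∉ A → ofSubtype s p = p := fun s p hp =>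
    ofSubtype_apply_of_not_mem s hp
  have h1 : A.card.factorial = Nat.card (Perm {x // x ∈ A}) := by
    rw [Nat.card_eq_fintype_card, Fintype.card_perm, Fintype.card_coe]
  rw [h1, ← Nat.card_prod]
  refine Nat.card_le_card_of_injective
    (fun z : L × Perm {x // x ∈ A} => (⟨z.1 * ofSubtype z.2,
      Y.mul_mem (hLY z.1.2) (hY _ (hfix z.2))⟩ : Y)) ?_
  rintro ⟨⟨a, ha⟩, s⟩ ⟨⟨b, hb⟩, t⟩ h
  simp only [Subtype.mk.injEq] at h
  have h2 : b⁻¹ * a = ofSubtype (t * s⁻¹) := by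
    rw [map_mul, map_inv, eq_mul_inv_iff_mul_eq, mul_assoc, h]; group
  have h3 : b⁻¹ * a = 1 := hL _ (L.mul_mem (L.inv_mem hb) ha) fun p hp => by
    rw [h2]; exact hfix _ p hp
  have h4 : a = b := by rw [inv_mul_eq_one] at h3; exact h3.symm
  subst h4
  rw [mul_right_inj] at h
  simp only [Prod.mk.injEq, true_and]
  exact ofSubtype_injective h

/-- Bochert's bound on the order of a primitive group not containing the alternating group. -/
theorem IsSmallPrim.card_mul_factorial_le {H : Subgroup (Perm (Fin n))} (hH : IsSmallPrim H)
    {k : ℕ} (hk : 2 * k ≤ n + 1) : Nat.card H * k.factorial ≤ n.factorial := by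
  obtain ⟨A, hA, hx⟩ := hH.exists_trivial_inter k hk
  have := _root_.card_mul_factorial_le (le_top : H ≤ ⊤) A hx (fun _ _ => Subgroup.mem_top _)
  rwa [hA, Subgroup.card_top, Nat.card_eq_fintype_card (α := Perm (Fin n)), Fintype.card_perm, Fintype.card_fin] at this

/-! ### Young subgroups, systems of blocks and the trichotomy -/

open scoped Pointwise

/-- The Young subgroup of all permutations preserving the colouring `c`. -/
def young {γ : Type} (c : Fin n → γ) : Subgroup (Perm (Fin n)) where
  carrier := {x | ∀ p, c (x p) = c p}
  mul_mem' := fun {x y} hx hy p => by rw [Perm.mul_apply, hx, hy]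
  one_mem' := fun p => rfl
  inv_mem' := fun {x} hx p => by rw [← hx (x⁻¹ p), perm_app_inv]

theorem mem_young {γ : Type} {c : Fin n → γ} {x : Perm (Fin n)} :
    x ∈ young c ↔ ∀ p, c (x p) = c p := Iff.rfl

/-- The group of all permutations permuting the fibres of `c`. -/
def sysStab {γ : Type} (c : Fin n → γ) : Subgroup (Perm (Fin n)) where
  carrier := {x | ∀ p q, c (x p) = c (x q) ↔ c p = c q}
  mul_mem' := fun {x y} hx hy p q => by rw [Perm.mul_apply, Perm.mul_apply, hx, hy]
  one_mem' := fun p q => Iff.rfl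
  inv_mem' := fun {x} hx p q => by rw [← hx (x⁻¹ p), perm_app_inv, perm_app_inv]

theorem mem_sysStab {γ : Type} {c : Fin n → γ} {x : Perm (Fin n)} :
    x ∈ sysStab c ↔ ∀ p q, c (x p) = c (x q) ↔ c p = c q := Iff.rfl

/-- `H` preserves a partition into two nonempty parts. -/
def Intrans (H : Subgroup (Perm (Fin n))) : Prop :=
  ∃ κ : Fin n → Bool, (∃ p q, κ p ≠ κ q) ∧ H ≤ young κ

/-- `κ` labels the blocks of a partition of `Fin n` into at least two blocks of size `a ≥ 2`. -/
structure IsSystem (κ : Fin n → Fin n) (a : ℕ) : Prop where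
  two_le : 2 ≤ a
  lt : a < n
  card : ∀ x, (Finset.univ.filter fun y => κ y = κ x).card = a

/-- `H` preserves a partition into blocks of equal size, with at least two blocks and at least two
points in each block. No transitivity is required. -/
def Imprim (H : Subgroup (Perm (Fin n))) : Prop :=
  ∃ (κ : Fin n → Fin n) (a : ℕ), IsSystem κ a ∧ H ≤ sysStab κ

theorem trichotomy (H : Subgroup (Perm (Fin n))) :
    Intrans H ∨ Imprim H ∨ MulAction.IsPreprimitive H (Fin n) := by
  classical
  by_cases ht : MulAction.IsPretransitive H (Fin n)
  swap
  · left
    rw [MulAction.isPretransitive_iff] at ht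
    push Not at ht
    obtain ⟨x, y, hxy⟩ := ht
    refine ⟨fun p => decide (p ∈ MulAction.orbit H x), ⟨x, y, ?_⟩, ?_⟩
    · have h1 : y ∉ MulAction.orbit H x := fun ⟨g, hg⟩ => hxy g hg
      simp [h1]
    · intro h hh p
      refine decide_eq_decide.2 ⟨fun ⟨k, hk⟩ => ⟨(⟨h, hh⟩ : H)⁻¹ * k, ?_⟩,
        fun ⟨k, hk⟩ => ⟨(⟨h, hh⟩ : H) * k, ?_⟩⟩
      · have hk' : k • x = h p := hk
        change ((⟨h, hh⟩ : H)⁻¹ * k) • x = p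
        rw [mul_smul, hk']
        exact perm_inv_app h p
      · have hk' : k • x = p := hk
        change ((⟨h, hh⟩ : H) * k) • x = h p
        rw [mul_smul, hk']
        rfl
  right
  by_cases hp : MulAction.IsPreprimitive H (Fin n)
  · exact Or.inr hp
  left
  have hb : ∃ B : Set (Fin n), MulAction.IsBlock H B ∧ ¬ MulAction.IsTrivialBlock B := by
    by_contra! h
    exact hp { isTrivialBlock_of_isBlock := fun {B} hB => h B hB }
  obtain ⟨B, hB, hBt⟩ := hb
  rw [MulAction.IsTrivialBlock, not_or, Set.not_subsingleton_iff] at hBt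
  obtain ⟨⟨b, hbB, b', hbB', hbb⟩, hBu⟩ := hBt
  have hg : ∀ p, ∃ g : H, p ∈ g • B := fun p => by
    obtain ⟨g, hg⟩ := ht.exists_smul_eq b p
    exact ⟨g, hg ▸ Set.smul_mem_smul_set hbB⟩
  choose g hg using hg
  have heq : ∀ (p) (h : H), p ∈ h • B → g p • B = h • B := fun p h hp => by
    by_contra hne
    exact (Set.disjoint_left.1 (hB hne)) (hg p) hp
  have : Nonempty (Fin n) := ⟨b⟩
  set κ : Fin n → Fin n := fun p => Function.invFun (fun q => g q • B) (g p • B) with hκ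
  have hκp : ∀ p, g (κ p) • B = g p • B := fun p =>
    Function.invFun_eq (f := fun q => g q • B) ⟨p, rfl⟩
  have hκ' : ∀ p q, κ p = κ q ↔ p ∈ g q • B := by
    intro p q
    constructor
    · intro h
      rw [← hκp q, ← h, hκp p]; exact hg p
    · intro h
      simp only [hκ]
      rw [heq p _ h]
  refine ⟨κ, B.ncard, ⟨?_, ?_, ?_⟩, ?_⟩
  · exact (Set.one_lt_ncard).2 ⟨b, hbB, b', hbB', hbb⟩
  · have h := Set.ncard_lt_ncard (s := B) (t := Set.univ)
      ⟨Set.subset_univ _, fun h => hBu (Set.univ_subset_iff.1 h)⟩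
    rwa [Set.ncard_univ, Nat.card_eq_fintype_card, Fintype.card_fin] at h
  · intro x
    rw [← Set.ncard_smul_set (g x) B, ← Set.ncard_coe_finset]
    congr 1
    ext y
    simp [hκ']
  · intro h hh p q
    rw [hκ' (h p) (h q), hκ' p q]
    have e : g (h q) • B = (⟨h, hh⟩ : H) • g q • B := by
      rw [smul_smul]
      apply heq
      rw [← smul_smul]
      exact Set.smul_mem_smul_set (a := (⟨h, hh⟩ : H)) (hg q)
    rw [e]
    exact Set.smul_mem_smul_set_iff (a := (⟨h, hh⟩ : H))

section Reach
variable {ι : Type} (H : ι → Subgroup (Perm (Fin n)))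

/-- Suitable even conjugates of the `H i`, `i ∈ S`, have intersection contained in `K`. -/
def Reach (S : Finset ι) (K : Subgroup (Perm (Fin n))) : Prop :=
  ∃ g : ι → Perm (Fin n), (∀ i, g i ∈ alternatingGroup (Fin n)) ∧
    ∀ x, (∀ i ∈ S, x ∈ conjSub (g i) (H i)) → x ∈ K

variable {H}

theorem Reach.top (S : Finset ι) : Reach H S ⊤ :=
  ⟨fun _ => 1, fun _ => Subgroup.one_mem _, fun _ _ => Subgroup.mem_top _⟩

theorem Reach.mono {S T : Finset ι} {K L : Subgroup (Perm (Fin n))} (h : Reach H S K) (hST : S ⊆ T)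
    (hKL : K ≤ L) : Reach H T L := by
  obtain ⟨g, hg, hx⟩ := h
  exact ⟨g, hg, fun x h => hKL (hx x fun i hi => h i (hST hi))⟩

variable [DecidableEq ι]

theorem Reach.insert {S : Finset ι} {K : Subgroup (Perm (Fin n))} (h : Reach H S K) {i : ι}
    (hi : i ∉ S) {g : Perm (Fin n)} (hg : g ∈ alternatingGroup (Fin n)) :
    Reach H (insert i S) (K ⊓ conjSub g (H i)) := by
  obtain ⟨f, hf, hx⟩ := h
  refine ⟨Function.update f i g, fun j => ?_, fun x h => ⟨hx x fun j hj => ?_, ?_⟩⟩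
  · by_cases hj : j = i
    · subst hj; simpa using hg
    · rw [Function.update_of_ne hj]; exact hf j
  · have hji : j ≠ i := fun e => hi (e ▸ hj)
    have := h j (Finset.mem_insert_of_mem hj)
    rwa [Function.update_of_ne hji] at this
  · have := h i (Finset.mem_insert_self _ _)
    rwa [Function.update_self] at this

/-- When two points carry the same label, composing with their transposition corrects the parity of a
relabelling. -/
theorem exists_even_comp {γ : Type} {κ : Fin n → γ} {p q : Fin n} (hpq : p ≠ q) (hκ : κ p = κ q)
    (g : Perm (Fin n)) : ∃ e ∈ alternatingGroup (Fin n), ∀ x, κ (e⁻¹ x) = κ (g x) := by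
  rcases Int.units_eq_one_or (sign g) with h | h
  · exact ⟨g⁻¹, by rw [mem_alternatingGroup, Perm.sign_inv, h], fun x => by rw [inv_inv]⟩
  · refine ⟨(swap p q * g)⁻¹, ?_, fun x => ?_⟩
    · rw [mem_alternatingGroup, Perm.sign_inv, Perm.sign_mul, sign_swap hpq, h]; rfl
    · rw [inv_inv, Perm.mul_apply]
      rw [swap_apply_def]
      split_ifs with h1 h2
      · rw [h1, hκ]
      · rw [h2, hκ]
      · rfl

theorem Reach.insert_young {γ : Type} {S : Finset ι} {K : Subgroup (Perm (Fin n))}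
    (h : Reach H S K) {i : ι} (hi : i ∉ S) {κ : Fin n → γ} {p q : Fin n} (hpq : p ≠ q)
    (hκ : κ p = κ q) (hH : H i ≤ young κ) (g : Perm (Fin n)) :
    Reach H (Insert.insert i S) (K ⊓ young (κ ∘ g)) := by
  obtain ⟨e, he, hx⟩ := exists_even_comp hpq hκ g
  refine (h.insert hi he).mono subset_rfl (inf_le_inf_left _ fun x h p => ?_)
  rw [mem_conjSub] at h
  have := hH h (e⁻¹ p)
  rw [Perm.mul_apply, Perm.mul_apply, perm_app_inv, hx, hx] at this
  exact this

theorem Reach.insert_sysStab {γ : Type} {S : Finset ι} {K : Subgroup (Perm (Fin n))}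
    (h : Reach H S K) {i : ι} (hi : i ∉ S) {κ : Fin n → γ} {p q : Fin n} (hpq : p ≠ q)
    (hκ : κ p = κ q) (hH : H i ≤ sysStab κ) (g : Perm (Fin n)) :
    Reach H (Insert.insert i S) (K ⊓ sysStab (κ ∘ g)) := by
  obtain ⟨e, he, hx⟩ := exists_even_comp hpq hκ g
  refine (h.insert hi he).mono subset_rfl (inf_le_inf_left _ fun x h p q => ?_)
  rw [mem_conjSub] at h
  have := hH h (e⁻¹ p) (e⁻¹ q)
  simp only [Perm.mul_apply, perm_app_inv, hx] at this
  exact this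

variable (H) in
/-- The `H i`, `i ∈ S`, have suitable conjugates whose intersection preserves a colouring with
at least `m` colours. -/
def Colors (S : Finset ι) (m : ℕ) : Prop :=
  ∃ (γ : Type) (c : Fin n → γ), Reach H S (young c) ∧ m ≤ (Set.range c).ncard

end Reach

/-! ### Colourings and intransitive groups -/

theorem card_filter_perm {P Q : Fin n → Prop} [DecidablePred P] [DecidablePred Q]
    (x : Perm (Fin n)) (h : ∀ q, Q (x q) ↔ P q) :
    (Finset.univ.filter Q).card = (Finset.univ.filter P).card := by
  symm
  refine Finset.card_bij (fun q _ => x q) ?_ (fun a _ b _ e => x.injective e) ?_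
  · intro q hq
    simpa [h] using hq
  · intro q hq
    refine ⟨x⁻¹ q, ?_, perm_app_inv x q⟩
    rw [Finset.mem_filter, ← h, perm_app_inv]
    simpa using hq

/-- Refining a colouring `c` by an invariant `v` separating two points of the same colour adds at
least one colour. -/
theorem ncard_range_lt_refine {γ δ : Type} {c : Fin n → γ} {v : Fin n → δ} {d d' : Fin n}
    (hc : c d = c d') (hv : v d ≠ v d') :
    (Set.range c).ncard + 1 ≤ (Set.range fun p => (c p, v p)).ncard := by
  have hi : Prod.fst '' (Set.range fun p => (c p, v p)) = Set.range c := by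
    rw [← Set.range_comp]; rfl
  have hle := Set.ncard_image_le (f := Prod.fst) (Set.finite_range fun p => (c p, v p))
  have hne : (Prod.fst '' (Set.range fun p => (c p, v p))).ncard
      ≠ (Set.range fun p => (c p, v p)).ncard := by
    intro e
    have := (Set.ncard_image_iff (Set.finite_range fun p => (c p, v p))).1 e
    exact hv (Prod.ext_iff.1 (this ⟨d, rfl⟩ ⟨d', rfl⟩ hc)).2
  rw [hi] at hle hne
  omega

theorem exists_same_colour {γ : Type} {c : Fin n → γ} (h : (Set.range c).ncard < n) :
    ∃ d d', d ≠ d' ∧ c d = c d' := by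
  by_contra! hh
  have hinj : Function.Injective c := fun a b e => by
    by_contra hab
    exact hh a b hab e
  rw [← Set.image_univ, Set.ncard_image_of_injective _ hinj, Set.ncard_univ,
    Nat.card_eq_fintype_card, Fintype.card_fin] at h
  exact lt_irrefl _ h

/-- Some permutation maps a finite set onto another one of equal size. -/
theorem exists_perm_map {A B : Finset (Fin n)} (h : A.card = B.card) :
    ∃ σ : Perm (Fin n), ∀ p, σ p ∈ B ↔ p ∈ A := by
  classical
  have e : {x // x ∈ A} ≃ {x // x ∈ B} := Fintype.equivOfCardEq (by simpa using h)
  refine ⟨e.extendSubtype, fun p => ⟨fun hp => ?_, fun hp => e.extendSubtype_mem p hp⟩⟩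
  by_contra hA
  exact e.extendSubtype_not_mem p hA hp

/-- Some permutation maps a finite set onto another one of equal size and takes prescribed values at
two points outside it. -/
theorem exists_perm_map_two {A B : Finset (Fin n)} (h : A.card = B.card) {u u' r r' : Fin n}
    (hu : u ∉ A) (hu' : u' ∉ A) (huu : u ≠ u') (hr : r ∉ B) (hr' : r' ∉ B) (hrr : r ≠ r') :
    ∃ σ : Perm (Fin n), (∀ p, σ p ∈ B ↔ p ∈ A) ∧ σ u = r ∧ σ u' = r' := by
  have key : ∀ (σ : Perm (Fin n)), (∀ p, σ p ∈ B ↔ p ∈ A) → ∀ u r, u ∉ A → r ∉ B →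
      ∀ p, (swap (σ u) r * σ) p ∈ B ↔ p ∈ A := by
    intro σ hσ u r hu hr p
    have h1 : σ u ∉ B := fun h => hu ((hσ u).1 h)
    rw [Perm.mul_apply, swap_apply_def]
    split_ifs with h2 h3
    · rw [← hσ, h2]; exact iff_of_false hr h1
    · rw [← hσ, h3]; exact iff_of_false h1 hr
    · exact hσ p
  obtain ⟨σ, hσ⟩ := exists_perm_map h
  have h1 := key σ hσ u r hu hr
  have h1u : (swap (σ u) r * σ) u = r := by rw [Perm.mul_apply, swap_apply_left]
  set τ := swap (σ u) r * σ
  refine ⟨swap (τ u') r' * τ, key τ h1 u' r' hu' hr', ?_, ?_⟩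
  · rw [Perm.mul_apply, h1u]
    refine swap_apply_of_ne_of_ne (fun e => huu ?_) hrr
    rw [← h1u] at e
    exact τ.injective e
  · rw [Perm.mul_apply, swap_apply_left]

section Colors
variable {ι : Type} {H : ι → Subgroup (Perm (Fin n))}

theorem Colors.mono {S T : Finset ι} {m m' : ℕ} (h : Colors H S m) (hST : S ⊆ T) (hm : m' ≤ m) :
    Colors H T m' := by
  obtain ⟨γ, c, hr, hc⟩ := h
  exact ⟨γ, c, hr.mono hST le_rfl, hm.trans hc⟩

theorem Colors.empty (hn : 0 < n) : Colors H ∅ 1 := by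
  refine ⟨Unit, fun _ => (), (Reach.top ∅).mono subset_rfl fun x _ p => rfl, ?_⟩
  rw [Nat.one_le_iff_ne_zero, ← Nat.pos_iff_ne_zero, Set.ncard_pos]
  exact ⟨(), ⟨0, hn⟩, rfl⟩

theorem Reach.colors {δ γ : Type} {S : Finset ι} {K : Subgroup (Perm (Fin n))} (h : Reach H S K)
    {m : ℕ} {c : Fin n → γ} {v : Fin n → δ} (hc : ∀ x ∈ K, ∀ p, c (x p) = c p)
    (hv : ∀ x ∈ K, ∀ p, v (x p) = v p) (hm : m ≤ (Set.range fun p => (c p, v p)).ncard) :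
    Colors H S m :=
  ⟨_, _, h.mono subset_rfl fun x hx p => Prod.ext (hc x hx p) (hv x hx p), hm⟩

variable [DecidableEq ι]

/-- An intransitive group adds a colour: it is positioned so as to separate two points of the same
colour. -/
theorem Colors.insert_intrans (hn : 4 ≤ n) {S : Finset ι} {m : ℕ} (h : Colors H S m) {i : ι}
    (hi : i ∉ S) (hI : Intrans (H i)) : Colors H (insert i S) (min n (m + 1)) := by
  by_cases hcn : n ≤ m
  · exact h.mono (Finset.subset_insert _ _) ((min_le_left _ _).trans hcn)
  obtain ⟨γ, c, hr, hc⟩ := h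
  by_cases hcn' : n ≤ (Set.range c).ncard
  · exact ⟨γ, c, hr.mono (Finset.subset_insert _ _) le_rfl, (min_le_left _ _).trans hcn'⟩
  obtain ⟨d, d', hdd, hcd⟩ := exists_same_colour (not_le.1 hcn')
  obtain ⟨κ, ⟨u, w, huw⟩, hκ⟩ := hI
  -- two of the points of `Fin n` have the same label under `κ`
  obtain ⟨p, q, hpq, hκpq⟩ : ∃ p q, p ≠ q ∧ κ p = κ q := by
    refine exists_same_colour ?_
    have := Set.ncard_le_card (Set.range κ)
    rw [Nat.card_eq_fintype_card, Fintype.card_bool] at this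
    omega
  have huw' : u ≠ w := fun e => huw (e ▸ rfl)
  obtain ⟨g, -, hg⟩ := exists_even_extending (k := 2) hn ![d, d'] ![u, w]
    (by intro a b; fin_cases a <;> fin_cases b <;> simp [hdd, hdd.symm])
    (by intro a b; fin_cases a <;> fin_cases b <;> simp [huw', huw'.symm])
  have hg0 : g d = u := hg 0
  have hg1 : g d' = w := hg 1
  refine (hr.insert_young hi hpq hκpq hκ g).colors (c := c) (v := κ ∘ g)
    (fun x hx => hx.1) (fun x hx => hx.2) ?_
  have := ncard_range_lt_refine (v := κ ∘ g) hcd (by simpa [hg0, hg1] using huw)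
  exact (min_le_right _ _).trans (by omega)

end Colors

/-! ### Colourings and imprimitive groups -/

section System
variable {κ : Fin n → Fin n} {a : ℕ}

theorem IsSystem.exists_ne (h : IsSystem κ a) (p : Fin n) : ∃ q, q ≠ p ∧ κ q = κ p := by
  have h1 : 1 < (Finset.univ.filter fun y => κ y = κ p).card := by
    rw [h.card]; exact h.two_le
  obtain ⟨q, hq, hqp⟩ := Finset.exists_mem_ne h1 p
  exact ⟨q, hqp, by simpa using hq⟩

/-- A system of blocks has a block avoiding any given union of few blocks. -/
theorem IsSystem.exists_notMem (h : IsSystem κ a) (T : Finset (Fin n)) (hT : T.card * a < n) :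
    ∃ p, ∀ t ∈ T, κ p ≠ κ t := by
  classical
  have h1 : (T.biUnion fun t => Finset.univ.filter fun y => κ y = κ t).card < n := by
    refine lt_of_le_of_lt (Finset.card_biUnion_le_card_mul _ _ a fun t _ => (h.card t).le) hT
  have h2 : ∃ p, p ∉ T.biUnion fun t => Finset.univ.filter fun y => κ y = κ t := by
    by_contra! hh
    rw [(Finset.eq_univ_iff_forall).2 hh, Finset.card_univ, Fintype.card_fin] at h1
    exact lt_irrefl _ h1
  obtain ⟨p, hp⟩ := h2
  refine ⟨p, fun t ht e => hp ?_⟩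
  exact Finset.mem_biUnion.2 ⟨t, ht, by simpa using e⟩

theorem IsSystem.two_mul_le (h : IsSystem κ a) : 2 * a ≤ n := by
  classical
  obtain ⟨p, hp⟩ := h.exists_notMem {⟨0, by have := h.lt; omega⟩} (by simpa using h.lt)
  have h1 := h.card p
  have h2 := h.card ⟨0, by have := h.lt; omega⟩
  have hd : Disjoint (Finset.univ.filter fun y => κ y = κ p)
      (Finset.univ.filter fun y => κ y = κ ⟨0, by have := h.lt; omega⟩) := by
    rw [Finset.disjoint_filter]
    intro x _ e e'
    exact hp _ (Finset.mem_singleton_self _) (e.symm.trans e')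
  have := Finset.card_le_univ (Finset.disjUnion _ _ hd)
  rw [Finset.card_disjUnion, h1, h2, Fintype.card_fin] at this
  omega

/-- The number of points of the `κ`-block of `p` with property `P` is unchanged by permutations
preserving both the blocks and `P`. -/
theorem card_block_inter {γ : Type} [DecidableEq γ] {f : Fin n → γ} {P : Fin n → Prop}
    [DecidablePred P] {x : Perm (Fin n)} (hx : x ∈ sysStab f) (hP : ∀ q, P (x q) ↔ P q)
    (p : Fin n) : (Finset.univ.filter fun q => f q = f (x p) ∧ P q).card
      = (Finset.univ.filter fun q => f q = f p ∧ P q).card :=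
  card_filter_perm x fun q => and_congr (hx q p) (hP q)

end System

/-- A colouring that is neither constant nor injective has a union `P` of colours, two points `d`, `d'`
of the same colour and, apart from them, points `e`, `f` inside and outside `P`. -/
theorem exists_third (hn : 5 ≤ n) {γ : Type} {c : Fin n → γ} (h1 : ∃ p q, c p ≠ c q)
    (h2 : ∃ p q, p ≠ q ∧ c p = c q) :
    ∃ (P : γ → Prop) (d d' e f : Fin n), d ≠ d' ∧ d ≠ e ∧ d ≠ f ∧ d' ≠ e ∧ d' ≠ f ∧ e ≠ f ∧
      c d = c d' ∧ P (c e) ∧ ¬ P (c f) := by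
  obtain ⟨d, d', hdd, hcd⟩ := h2
  obtain ⟨o, ho⟩ : ∃ o, c o ≠ c d := by
    by_contra! hh
    obtain ⟨p, q, hpq⟩ := h1
    exact hpq ((hh p).trans (hh q).symm)
  have hod : o ≠ d := fun e => ho (e ▸ rfl)
  have hod' : o ≠ d' := fun e => ho (by rw [e, hcd])
  by_cases h3 : ∃ f, f ≠ d ∧ f ≠ d' ∧ c f = c d
  · obtain ⟨f, hf, hf', hcf⟩ := h3
    refine ⟨(· ≠ c d), d, d', o, f, hdd, hod.symm, hf.symm, hod'.symm, hf'.symm, ?_, hcd, ho, ?_⟩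
    · rintro rfl; exact ho hcf
    · exact fun h => h hcf
  push Not at h3
  by_cases h4 : ∃ f, f ≠ d ∧ f ≠ d' ∧ c f ≠ c o
  · obtain ⟨f, hf, hf', hcf⟩ := h4
    refine ⟨(· = c o), d, d', o, f, hdd, hod.symm, hf.symm, hod'.symm, hf'.symm, ?_, hcd, rfl, hcf⟩
    rintro rfl; exact hcf rfl
  push Not at h4
  have hc : ∀ T : Finset (Fin n), T.card < 5 → ∃ z, z ∉ T := fun T hT => by
    by_contra! hh
    rw [(Finset.eq_univ_iff_forall).2 hh, Finset.card_univ, Fintype.card_fin] at hT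
    omega
  obtain ⟨z, hz⟩ := hc {d, d', o} (Finset.card_le_three.trans_lt (by norm_num))
  simp only [Finset.mem_insert, Finset.mem_singleton, not_or] at hz
  obtain ⟨w, hw⟩ := hc {d, d', o, z} (Finset.card_le_four.trans_lt (by norm_num))
  simp only [Finset.mem_insert, Finset.mem_singleton, not_or] at hw
  have hcz := h4 z hz.1 hz.2.1
  have hcw := h4 w hw.1 hw.2.1
  exact ⟨(· = c d), o, z, d, w, hz.2.2 ∘ Eq.symm, hod, hw.2.2.1 ∘ Eq.symm, hz.1,
    hw.2.2.2 ∘ Eq.symm, hw.1 ∘ Eq.symm, hcz.symm, rfl, fun e => ho (hcw ▸ e)⟩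

/-- A system of blocks can be positioned so that the blocks of `d` and `d'` contain different numbers of
points of `P`. If they contain equal numbers in one position, exchanging `e` and `f` changes this. -/
theorem IsSystem.exists_split (hn : 6 ≤ n) {κ : Fin n → Fin n} {a : ℕ} (hκ : IsSystem κ a)
    (P : Fin n → Prop) [DecidablePred P] {d d' e f : Fin n} (h1 : d ≠ d') (h2 : d ≠ e)
    (h3 : d ≠ f) (h4 : d' ≠ e) (h5 : d' ≠ f) (h6 : e ≠ f) (he : P e) (hf : ¬ P f) :
    ∃ g : Perm (Fin n), (Finset.univ.filter fun q => κ (g q) = κ (g d) ∧ P q).card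
      ≠ (Finset.univ.filter fun q => κ (g q) = κ (g d') ∧ P q).card := by
  obtain ⟨p', hp'⟩ := hκ.exists_notMem {d} (by simpa using hκ.lt)
  have hp : κ p' ≠ κ d := hp' d (by simp)
  obtain ⟨q, hq, hqp⟩ := hκ.exists_ne d
  obtain ⟨q', hq', hqp'⟩ := hκ.exists_ne p'
  have a1 : d ≠ p' := fun e => hp (by rw [← e])
  have a2 : d ≠ q' := fun e => hp (by rw [← hqp', ← e])
  have a3 : p' ≠ q := fun e => hp (by rw [e, hqp])
  have a4 : q ≠ q' := fun e => hp (by rw [← hqp', ← e, hqp])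
  obtain ⟨g, -, hg⟩ := exists_even_extending (k := 4) hn ![d, d', e, f] ![d, p', q, q']
    (by intro a b; fin_cases a <;> fin_cases b <;>
          simp [h1, h2, h3, h4, h5, h6, h1.symm, h2.symm, h3.symm, h4.symm, h5.symm, h6.symm])
    (by intro a b; fin_cases a <;> fin_cases b <;>
          simp [a1, a2, a3, a4, hq, hq', a1.symm, a2.symm, a3.symm, a4.symm, hq.symm, hq'.symm])
  have g1 : g d = d := hg 0
  have g2 : g d' = p' := hg 1
  have g3 : g e = q := hg 2
  have g4 : g f = q' := hg 3
  by_cases hne : (Finset.univ.filter fun q => κ (g q) = κ (g d) ∧ P q).card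
      ≠ (Finset.univ.filter fun q => κ (g q) = κ (g d') ∧ P q).card
  · exact ⟨g, hne⟩
  push Not at hne
  have s1 : (g * swap e f) d = d := by rw [Perm.mul_apply, swap_apply_of_ne_of_ne h2 h3, g1]
  have s2 : (g * swap e f) d' = p' := by rw [Perm.mul_apply, swap_apply_of_ne_of_ne h4 h5, g2]
  have s3 : (g * swap e f) e = q' := by rw [Perm.mul_apply, swap_apply_left, g4]
  have s4 : (g * swap e f) f = q := by rw [Perm.mul_apply, swap_apply_right, g3]
  refine ⟨g * swap e f, ?_⟩
  rw [g1, g2] at hne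
  rw [s1, s2]
  -- exchanging `e` and `f` removes `e` from the first count and adds it to the second
  have e1 : (Finset.univ.filter fun r => κ ((g * swap e f) r) = κ d ∧ P r)
      = (Finset.univ.filter fun r => κ (g r) = κ d ∧ P r).erase e := by
    ext r
    simp only [Finset.mem_filter, Finset.mem_univ, true_and, Finset.mem_erase]
    by_cases hre : r = e
    · subst hre
      rw [s3, hqp']
      exact iff_of_false (fun h => hp h.1) (fun h => h.1 rfl)
    by_cases hrf : r = f
    · subst hrf
      exact iff_of_false (fun h => hf h.2) (fun h => hf h.2.2)
    rw [Perm.mul_apply, swap_apply_of_ne_of_ne hre hrf]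
    exact ⟨fun h => ⟨hre, h⟩, fun h => h.2⟩
  have e2 : (Finset.univ.filter fun r => κ ((g * swap e f) r) = κ p' ∧ P r)
      = insert e (Finset.univ.filter fun r => κ (g r) = κ p' ∧ P r) := by
    ext r
    simp only [Finset.mem_filter, Finset.mem_univ, true_and, Finset.mem_insert]
    by_cases hre : r = e
    · subst hre
      rw [s3, hqp']
      exact iff_of_true ⟨rfl, he⟩ (Or.inl rfl)
    by_cases hrf : r = f
    · subst hrf
      exact iff_of_false (fun h => hf h.2) (fun h => h.elim (fun h => h6 h.symm) fun h => hf h.2)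
    rw [Perm.mul_apply, swap_apply_of_ne_of_ne hre hrf]
    exact ⟨fun h => Or.inr h, fun h => h.resolve_left hre⟩
  rw [e1, e2, Finset.card_erase_of_mem, Finset.card_insert_of_notMem]
  · omega
  · intro h
    rw [Finset.mem_filter, g3, hqp] at h
    exact hp h.2.1.symm
  · rw [Finset.mem_filter, g3, hqp]
    exact ⟨Finset.mem_univ _, rfl, he⟩

section Colors
variable {ι : Type} [DecidableEq ι] {H : ι → Subgroup (Perm (Fin n))}

/-- An imprimitive group adds a colour to a nonconstant colouring: the number of points of `P` in the
block of a point is an invariant, and it can be made to separate two points of the same colour. -/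
theorem Colors.insert_imprim (hn : 6 ≤ n) {S : Finset ι} {m : ℕ} (hm : 2 ≤ m)
    (h : Colors H S m) {i : ι} (hi : i ∉ S) (hI : Imprim (H i)) :
    Colors H (insert i S) (min n (m + 1)) := by
  classical
  obtain ⟨γ, c, hr, hc⟩ := h
  by_cases hcn' : n ≤ (Set.range c).ncard
  · exact ⟨γ, c, hr.mono (Finset.subset_insert _ _) le_rfl, (min_le_left _ _).trans hcn'⟩
  obtain ⟨P, d, d', e, f, h1, h2, h3, h4, h5, h6, hcd, he, hf⟩ :=
    exists_third (by omega) (by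
      obtain ⟨_, ⟨p, rfl⟩, _, ⟨q, rfl⟩, h⟩ := (Set.one_lt_ncard).1 (lt_of_lt_of_le hm hc)
      exact ⟨p, q, h⟩) (exists_same_colour (not_le.1 hcn'))
  obtain ⟨κ, a, hκ, hHκ⟩ := hI
  obtain ⟨g, hg⟩ := hκ.exists_split hn (fun p => P (c p)) h1 h2 h3 h4 h5 h6 he hf
  obtain ⟨q, hq, hqp⟩ := hκ.exists_ne d
  refine (hr.insert_sysStab hi hq hqp hHκ g).colors (c := c)
    (v := fun p => (Finset.univ.filter fun q => (κ ∘ g) q = (κ ∘ g) p ∧ P (c q)).card)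
    (fun x hx => hx.1) (fun x hx p => ?_) ?_
  · exact card_block_inter hx.2 (fun q => by rw [hx.1 q]) p
  · have := ncard_range_lt_refine
      (v := fun p => (Finset.univ.filter fun q => (κ ∘ g) q = (κ ∘ g) p ∧ P (c q)).card) hcd hg
    exact (min_le_right _ _).trans (by omega)

/-- Every nonprimitive group adds a colour to a nonconstant colouring. -/
theorem Colors.extend (hn : 6 ≤ n) {S : Finset ι} {m : ℕ} (hm : 2 ≤ m) (h : Colors H S m)
    (T : Finset ι) (hd : Disjoint T S) (hT : ∀ i ∈ T, Intrans (H i) ∨ Imprim (H i)) :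
    Colors H (T ∪ S) (min n (m + T.card)) := by
  induction T using Finset.induction_on with
  | empty => simpa using h.mono subset_rfl (min_le_right n m)
  | insert i T hi ih =>
    rw [Finset.disjoint_insert_left] at hd
    have h1 := ih hd.2 fun j hj => hT j (Finset.mem_insert_of_mem hj)
    have hi' : i ∉ T ∪ S := by simp [hi, hd.1]
    have h2 : Colors H (insert i (T ∪ S)) (min n (min n (m + T.card) + 1)) := by
      rcases hT i (Finset.mem_insert_self _ _) with h | h
      · exact h1.insert_intrans (by omega) hi' h
      · exact h1.insert_imprim hn (by omega) hi' h
    rw [Finset.insert_union, Finset.card_insert_of_notMem hi]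
    exact h2.mono subset_rfl (by omega)

end Colors

/-! ### Pairs of systems of blocks -/

/-- Some relative position of the two systems of blocks `κ`, `κ'` distinguishes a set `X` of points
with `3 ≤ |X| ≤ n - 3`. -/
def PairInv (κ κ' : Fin n → Fin n) : Prop :=
  ∃ (g : Perm (Fin n)) (X : Finset (Fin n)), 3 ≤ X.card ∧ X.card + 3 ≤ n ∧
    ∀ x ∈ sysStab κ ⊓ sysStab (κ' ∘ g), ∀ p, x p ∈ X ↔ p ∈ X

theorem card_add_le_of_disjoint {X T : Finset (Fin n)} (h : ∀ p ∈ T, p ∉ X) :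
    X.card + T.card ≤ n := by
  classical
  have hd : Disjoint X T := Finset.disjoint_right.2 fun p hp => h p hp
  have := Finset.card_le_univ (X.disjUnion T hd)
  rwa [Finset.card_disjUnion, Fintype.card_fin] at this

/-- The distinguished set consists of the points whose block for `κ' ∘ g` lies inside their block for
`κ`; the sets `T` and `T'` provide three points inside and three points outside it. -/
theorem pairInv_of_le {κ κ' : Fin n → Fin n} (g : Perm (Fin n)) {T T' : Finset (Fin n)}
    (hT : 3 ≤ T.card) (hT' : 3 ≤ T'.card)
    (h : ∀ p ∈ T, ∀ q, κ' (g q) = κ' (g p) → κ q = κ p)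
    (h' : ∀ p ∈ T', ∃ q, κ' (g q) = κ' (g p) ∧ κ q ≠ κ p) : PairInv κ κ' := by
  classical
  refine ⟨g, Finset.univ.filter fun p => ∀ q, κ' (g q) = κ' (g p) → κ q = κ p,
    hT.trans (Finset.card_le_card fun p hp => by simpa using h p hp), ?_, fun x hx p => ?_⟩
  · have := card_add_le_of_disjoint
      (X := Finset.univ.filter fun p => ∀ q, κ' (g q) = κ' (g p) → κ q = κ p) (T := T')
      fun p hp hp' => by
        obtain ⟨q, hq, hne⟩ := h' p hp
        exact hne ((Finset.mem_filter.1 hp').2 q hq)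
    omega
  · simp only [Finset.mem_filter, Finset.mem_univ, true_and]
    have h2 : ∀ p q, κ' (g (x p)) = κ' (g (x q)) ↔ κ' (g p) = κ' (g q) := hx.2
    constructor
    · intro hh q hq
      exact (hx.1 q p).1 (hh (x q) ((h2 q p).2 hq))
    · intro hh q hq
      rw [← perm_app_inv x q] at hq ⊢
      exact (hx.1 _ p).2 (hh _ ((h2 _ p).1 hq))

/-- Block sizes `3 ≤ a' ≤ a` with `a + a' < n`: one block of `κ'` is placed inside a block of `κ`, and
another one is placed across two blocks. -/
theorem IsSystem.pairInv_of_three_le {κ κ' : Fin n → Fin n} {a a' : ℕ} (hκ : IsSystem κ a)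
    (hκ' : IsSystem κ' a') (h3 : 3 ≤ a') (hle : a' ≤ a) (hlt : a + a' < n) : PairInv κ κ' := by
  classical
  have hn0 : 0 < n := by omega
  let o : Fin n := ⟨0, hn0⟩
  obtain ⟨Y, hY, hYc⟩ := Finset.exists_subset_card_eq
    (s := Finset.univ.filter fun y => κ y = κ o) (n := a') (by rw [hκ.card]; exact hle)
  have hY' : ∀ p ∈ Y, κ p = κ o := fun p hp => (Finset.mem_filter.1 (hY hp)).2
  -- the complement of `Y` is too large for a single block
  obtain ⟨u, w, hu, hw, huw⟩ : ∃ u w, u ∉ Y ∧ w ∉ Y ∧ κ u ≠ κ w := by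
    by_contra! hh
    have hYc' : (Yᶜ : Finset (Fin n)).card = n - a' := by
      rw [Finset.card_compl, hYc, Fintype.card_fin]
    obtain ⟨u, hu⟩ : (Yᶜ : Finset (Fin n)).Nonempty := Finset.card_pos.1 (by omega)
    have : (Yᶜ : Finset (Fin n)).card ≤ a := by
      rw [← hκ.card u]
      refine Finset.card_le_card fun w hw => ?_
      simpa using hh w u (by simpa using hw) (by simpa using hu)
    omega
  obtain ⟨r, hr⟩ := hκ'.exists_notMem {o} (by simpa using hκ'.lt)
  have hr : κ' r ≠ κ' o := hr o (by simp)
  obtain ⟨r', hr', hrr'⟩ := hκ'.exists_ne r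
  obtain ⟨g, hg, hgu, hgw⟩ := exists_perm_map_two (A := Y)
    (B := Finset.univ.filter fun y => κ' y = κ' o) (by rw [hYc, hκ'.card]) hu hw
    (fun e => huw (e ▸ rfl)) (r := r) (r' := r') (by simpa using hr) (by simpa [hrr'] using hr)
    hr'.symm
  have hg' : ∀ p, κ' (g p) = κ' o ↔ p ∈ Y := fun p => by rw [← hg]; simp
  refine pairInv_of_le g (T := Y) (T' := Finset.univ.filter fun p => κ' (g p) = κ' r) (by omega) ?_
    ?_ ?_
  · rw [← card_filter_perm (Q := fun y => κ' y = κ' r) g fun q => Iff.rfl, hκ'.card]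
    exact h3
  · intro p hp q hq
    rw [(hg' p).2 hp, hg'] at hq
    rw [hY' p hp, hY' q hq]
  · intro p hp
    have hp : κ' (g p) = κ' r := (Finset.mem_filter.1 hp).2
    by_cases h : κ u = κ p
    · exact ⟨w, by rw [hgw, hp, hrr'], fun e => huw (h.trans e.symm)⟩
    · exact ⟨u, by rw [hgu, hp], h⟩

theorem IsSystem.eq_or_eq {κ : Fin n → Fin n} (hκ : IsSystem κ 2) {p q : Fin n} (hpq : p ≠ q)
    (h : κ p = κ q) {r : Fin n} (hr : κ r = κ q) : r = p ∨ r = q := by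
  classical
  by_contra! hh
  have : ({r, p, q} : Finset (Fin n)).card ≤ 2 := by
    rw [← hκ.card q]
    refine Finset.card_le_card fun x hx => ?_
    simp only [Finset.mem_insert, Finset.mem_singleton] at hx
    simp only [Finset.mem_filter, Finset.mem_univ, true_and]
    rcases hx with rfl | rfl | rfl <;> first | assumption | rfl
  rw [Finset.card_eq_three.2 ⟨r, p, q, hh.1, hh.2, hpq, rfl⟩] at this
  omega

/-- A system of blocks of size two has four blocks `{v i 0, v i 1}`. -/
theorem IsSystem.exists_four {κ : Fin n → Fin n} (hn : 9 ≤ n) (hκ : IsSystem κ 2) :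
    ∃ v : Fin 4 → Fin 2 → Fin n, (Function.Injective fun i : Fin 4 × Fin 2 => v i.1 i.2) ∧
      ∀ i j i' j', κ (v i j) = κ (v i' j') ↔ i = i' := by
  classical
  let o : Fin n := ⟨0, by omega⟩
  obtain ⟨p1, h1⟩ := hκ.exists_notMem {o} (by simp; omega)
  obtain ⟨p2, h2⟩ := hκ.exists_notMem {o, p1}
    ((Nat.mul_le_mul_right _ Finset.card_le_two).trans_lt (by omega))
  obtain ⟨p3, h3⟩ := hκ.exists_notMem {o, p1, p2}
    ((Nat.mul_le_mul_right _ Finset.card_le_three).trans_lt (by omega))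
  simp only [Finset.mem_insert, Finset.mem_singleton, forall_eq_or_imp, forall_eq] at h1 h2 h3
  choose f hf hfκ using hκ.exists_ne
  have hw : ∀ i i' : Fin 4, κ (![o, p1, p2, p3] i) = κ (![o, p1, p2, p3] i') ↔ i = i' := by
    intro i i'
    fin_cases i <;> fin_cases i' <;> simp [h1, h2, h3, h1.symm, h2.1.symm, h2.2.symm, h3.1.symm,
      h3.2.1.symm, h3.2.2.symm]
  have hv : ∀ (i : Fin 4) (j : Fin 2), κ (![![o, p1, p2, p3] i, f (![o, p1, p2, p3] i)] j)
      = κ (![o, p1, p2, p3] i) := by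
    intro i j
    fin_cases j <;> simp [hfκ]
  refine ⟨fun i j => ![![o, p1, p2, p3] i, f (![o, p1, p2, p3] i)] j, ?_, ?_⟩
  · rintro ⟨i, j⟩ ⟨i', j'⟩ h
    have hi : i = i' := by
      have := congrArg κ h
      simp only [hv] at this
      exact (hw i i').1 this
    subst hi
    have : j = j' := by
      by_contra hj
      fin_cases j <;> fin_cases j' <;> simp [hf, (hf _).symm] at h hj
    rw [this]
  · intro i j i' j'
    rw [hv, hv, hw]

theorem IsSystem.pairInv_two {κ κ' : Fin n → Fin n} (hn : 10 ≤ n) (hκ : IsSystem κ 2)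
    (hκ' : IsSystem κ' 2) : PairInv κ κ' := by
  classical
  obtain ⟨v, hv, hvκ⟩ := hκ.exists_four (by omega)
  obtain ⟨w, hw, hwκ⟩ := hκ'.exists_four (by omega)
  -- blocks `0` and `1` of `κ` go to blocks of `κ'`, while blocks `2` and `3` are crossed
  let τ : Perm (Fin 4 × Fin 2) := swap (2, 1) (3, 0)
  let e : Fin 8 ≃ Fin 4 × Fin 2 := (finProdFinEquiv (m := 4) (n := 2)).symm
  obtain ⟨g, -, hg⟩ := exists_even_extending (k := 8) (by omega)
    (fun i => v (e i).1 (e i).2) (fun i => w (τ (e i)).1 (τ (e i)).2)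
    (hv.comp e.injective) ((hw.comp τ.injective).comp e.injective)
  have hg' : ∀ s : Fin 4 × Fin 2, g (v s.1 s.2) = w (τ s).1 (τ s).2 := fun s => by
    have := hg (e.symm s)
    simpa using this
  have hvi : ∀ i j i' j', v i j = v i' j' ↔ (i, j) = (i', j') := fun i j i' j' =>
    hv.eq_iff (a := (i, j)) (b := (i', j'))
  have g00 : g (v 0 0) = w 0 0 := hg' (0, 0)
  have g01 : g (v 0 1) = w 0 1 := hg' (0, 1)
  have g10 : g (v 1 0) = w 1 0 := hg' (1, 0)
  have g11 : g (v 1 1) = w 1 1 := hg' (1, 1)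
  have g20 : g (v 2 0) = w 2 0 := hg' (2, 0)
  have g21 : g (v 2 1) = w 3 0 := hg' (2, 1)
  have g30 : g (v 3 0) = w 2 1 := hg' (3, 0)
  have g31 : g (v 3 1) = w 3 1 := hg' (3, 1)
  have key : ∀ i : Fin 4, g (v i 0) = w i 0 → g (v i 1) = w i 1 → ∀ j q,
      κ' (g q) = κ' (g (v i j)) → κ q = κ (v i j) := by
    intro i h0 h1 j q hq
    have hj : κ' (g (v i j)) = κ' (w i 1) := by
      fin_cases j
      · change κ' (g (v i 0)) = _
        rw [h0]; exact (hwκ _ _ _ _).2 rfl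
      · change κ' (g (v i 1)) = _
        rw [h1]
    rw [hj] at hq
    have hne : w i 0 ≠ w i 1 := fun e => by
      have := hw (a₁ := (i, 0)) (a₂ := (i, 1)) e
      simp at this
    rcases hκ'.eq_or_eq hne ((hwκ _ _ _ _).2 rfl) hq with h | h
    · rw [← h0] at h
      rw [g.injective h]; exact (hvκ _ _ _ _).2 rfl
    · rw [← h1] at h
      rw [g.injective h]; exact (hvκ _ _ _ _).2 rfl
  refine pairInv_of_le g (T := {v 0 0, v 0 1, v 1 0}) (T' := {v 2 0, v 2 1, v 3 0}) ?_ ?_ ?_ ?_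
  · rw [Finset.card_eq_three.2 ⟨v 0 0, v 0 1, v 1 0, by simp [hvi], by simp [hvi], by simp [hvi],
      rfl⟩]
  · rw [Finset.card_eq_three.2 ⟨v 2 0, v 2 1, v 3 0, by simp [hvi], by simp [hvi], by simp [hvi],
      rfl⟩]
  · intro p hp
    simp only [Finset.mem_insert, Finset.mem_singleton] at hp
    rcases hp with rfl | rfl | rfl
    · exact key 0 g00 g01 0
    · exact key 0 g00 g01 1
    · exact key 1 g10 g11 0
  · intro p hp
    simp only [Finset.mem_insert, Finset.mem_singleton] at hp
    rcases hp with rfl | rfl | rfl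
    · exact ⟨v 3 0, by rw [g20, g30, hwκ], by rw [Ne, hvκ]; decide⟩
    · exact ⟨v 3 1, by rw [g21, g31, hwκ], by rw [Ne, hvκ]; decide⟩
    · exact ⟨v 2 0, by rw [g20, g30, hwκ], by rw [Ne, hvκ]; decide⟩

/-- Two blocks of size `n / 2` in both systems: three points of one block of `κ` are placed
together with all but three points of the other, and the points lying in an intersection of size
three are distinguished. -/
theorem IsSystem.pairInv_half {κ κ' : Fin n → Fin n} {a : ℕ} (hn : 13 ≤ n) (ha : 2 * a = n)
    (hκ : IsSystem κ a) (hκ' : IsSystem κ' a) : PairInv κ κ' := by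
  classical
  let o : Fin n := ⟨0, by omega⟩
  set B := Finset.univ.filter fun y => κ y = κ o with hB
  have hBc : B.card = a := hκ.card o
  have hBc' : Bᶜ.card = a := by rw [Finset.card_compl, hBc, Fintype.card_fin]; omega
  obtain ⟨T, hT, hTc⟩ := Finset.exists_subset_card_eq (s := B) (n := 3) (by omega)
  obtain ⟨U, hU, hUc⟩ := Finset.exists_subset_card_eq (s := Bᶜ) (n := a - 3) (by omega)
  have hd : Disjoint T U := Finset.disjoint_of_subset_left hT
    (Finset.disjoint_of_subset_right hU disjoint_compl_right)
  obtain ⟨g, hg⟩ := exists_perm_map (A := T ∪ U) (B := Finset.univ.filter fun y => κ' y = κ' o)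
    (by rw [Finset.card_union_of_disjoint hd, hκ'.card, hTc, hUc]; omega)
  have hg : ∀ p, κ' (g p) = κ' o ↔ p ∈ T ∨ p ∈ U := fun p => by
    rw [← Finset.mem_union, ← hg]; simp
  have hT0 : ∀ p ∈ T, κ p = κ o := fun p hp => (Finset.mem_filter.1 (hT hp)).2
  have hU0 : ∀ p ∈ U, κ p ≠ κ o := fun p hp h => by
    have := hU hp
    simp [hB, h] at this
  -- `κ'` has only two blocks
  have htwo : ∀ p q, κ' p ≠ κ' o → κ' q ≠ κ' o → κ' q = κ' p := by
    intro p q hp hq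
    by_contra hpq
    have h1 : (Finset.univ.filter fun y => κ' y = κ' p) ∩ (Finset.univ.filter fun y => κ' y = κ' o)
        = ∅ := by
      ext y
      simp only [Finset.mem_inter, Finset.mem_filter, Finset.mem_univ, true_and,
        Finset.notMem_empty, iff_false, not_and]
      exact fun h h' => hp (h.symm.trans h')
    have h2 := card_add_le_of_disjoint (X := (Finset.univ.filter fun y => κ' y = κ' p) ∪
      (Finset.univ.filter fun y => κ' y = κ' o)) (T := {q}) (by simp [hpq, hq])
    rw [Finset.card_union, h1, hκ'.card, hκ'.card] at h2
    simp at h2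
    omega
  refine ⟨g, Finset.univ.filter fun p =>
    (Finset.univ.filter fun q => κ q = κ p ∧ κ' (g q) = κ' (g p)).card = 3, ?_, ?_, ?_⟩
  · refine hTc.ge.trans (Finset.card_le_card fun p hp => ?_)
    have e : (Finset.univ.filter fun q => κ q = κ p ∧ κ' (g q) = κ' (g p)) = T := by
      ext q
      simp only [Finset.mem_filter, Finset.mem_univ, true_and]
      rw [(hg p).2 (Or.inl hp), hT0 p hp, hg]
      exact ⟨fun h => h.2.resolve_right fun h' => hU0 q h' h.1, fun h => ⟨hT0 q h, Or.inl h⟩⟩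
    rw [Finset.mem_filter, e]
    exact ⟨Finset.mem_univ _, hTc⟩
  · have hBT : (B \ T).card = a - 3 := by rw [Finset.card_sdiff_of_subset hT, hBc, hTc]
    have := card_add_le_of_disjoint (X := Finset.univ.filter fun p =>
      (Finset.univ.filter fun q => κ q = κ p ∧ κ' (g q) = κ' (g p)).card = 3) (T := B \ T)
      fun p hp hp' => by
        rw [Finset.mem_sdiff] at hp
        have hp0 : κ p = κ o := (Finset.mem_filter.1 hp.1).2
        have hgp : κ' (g p) ≠ κ' o := fun h =>
          ((hg p).1 h).elim hp.2 fun h => hU0 p h hp0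
        have e : (Finset.univ.filter fun q => κ q = κ p ∧ κ' (g q) = κ' (g p)) = B \ T := by
          ext q
          simp only [Finset.mem_filter, Finset.mem_univ, true_and, Finset.mem_sdiff, hB]
          rw [hp0]
          refine and_congr_right fun hq => ⟨fun h h' => hgp ?_, fun h => ?_⟩
          · rw [← h, hg]; exact Or.inl h'
          · exact htwo _ _ hgp fun h' => ((hg q).1 h').elim h fun h' => hU0 q h' hq
        rw [Finset.mem_filter, e, hBT] at hp'
        omega
    omega
  · intro x hx p
    simp only [Finset.mem_filter, Finset.mem_univ, true_and]
    have h2 : ∀ p q, κ' (g (x p)) = κ' (g (x q)) ↔ κ' (g p) = κ' (g q) := hx.2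
    rw [card_filter_perm (Q := fun q => κ q = κ (x p) ∧ κ' (g q) = κ' (g (x p))) x
      fun q => and_congr (hx.1 q p) (h2 q p)]

/-! ### Triples of systems of blocks -/

theorem four_le_ncard_range {γ : Type} {f : Fin n → γ} (v : Fin 4 → Fin n)
    (h : Function.Injective (f ∘ v)) : 4 ≤ (Set.range f).ncard := by
  have h1 : (Set.range (f ∘ v)).ncard = 4 := by
    rw [← Set.image_univ, Set.ncard_image_of_injective _ h, Set.ncard_univ,
      Nat.card_eq_fintype_card, Fintype.card_fin]
  rw [← h1]
  exact Set.ncard_le_ncard (Set.range_comp_subset_range v f) (Set.finite_range f)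

theorem four_le_ncard_range' {f : Fin n → Bool × ℕ} {p q r s : Fin n} {k l l' m : ℕ}
    (hp : f p = (true, k)) (hq : f q = (false, l)) (hr : f r = (true, l')) (hs : f s = (false, m))
    (h1 : k ≠ l') (h2 : l ≠ m) : 4 ≤ (Set.range f).ncard := by
  refine four_le_ncard_range ![p, q, r, s] fun i j => ?_
  fin_cases i <;> fin_cases j <;> simp [hp, hq, hr, hs, h1, h2, h1.symm, h2.symm]

/-- A third system of blocks can be positioned so that it splits `X` and its complement. -/
theorem IsSystem.exists_four_values {κ : Fin n → Fin n} {a : ℕ} (hn : 13 ≤ n)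
    (hκ : IsSystem κ a) {X : Finset (Fin n)} (hX : 3 ≤ X.card) (hXn : 2 * X.card ≤ n) :
    ∃ g : Perm (Fin n), 4 ≤ (Set.range fun p =>
      (decide (p ∈ X), (Finset.univ.filter fun q => κ (g q) = κ (g p) ∧ q ∈ X).card)).ncard := by
  classical
  -- it suffices to choose the image `Y` of `X`
  suffices hY : ∃ Y : Finset (Fin n), Y.card = X.card ∧ 4 ≤ (Set.range fun p =>
      (decide (p ∈ Y), (Finset.univ.filter fun q => κ q = κ p ∧ q ∈ Y).card)).ncard by
    obtain ⟨Y, hYX, hY⟩ := hY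
    obtain ⟨g, hg⟩ := exists_perm_map hYX.symm
    refine ⟨g, hY.trans (Set.ncard_le_ncard ?_ (Set.finite_range _))⟩
    rintro _ ⟨p, rfl⟩
    refine ⟨g⁻¹ p, ?_⟩
    have h1 : g⁻¹ p ∈ X ↔ p ∈ Y := by rw [← hg, perm_app_inv]
    refine Prod.ext (decide_eq_decide.2 h1) ?_
    change (Finset.univ.filter fun q => κ (g q) = κ (g (g⁻¹ p)) ∧ q ∈ X).card = _
    rw [perm_app_inv]
    exact (card_filter_perm g fun q => and_congr Iff.rfl (hg q)).symm
  let o : Fin n := ⟨0, by omega⟩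
  obtain ⟨r, hr⟩ := hκ.exists_notMem {o} (by simpa using hκ.lt)
  have hr : κ r ≠ κ o := hr o (by simp)
  have hro : r ≠ o := fun e => hr (e ▸ rfl)
  obtain ⟨o', ho', hoo'⟩ := hκ.exists_ne o
  obtain ⟨r', hr', hrr'⟩ := hκ.exists_ne r
  have hro' : r ≠ o' := fun e => hr (e ▸ hoo')
  have hr'o : r' ≠ o := fun e => hr (hrr' ▸ e ▸ rfl)
  have hro2 : r' ≠ o' := fun e => hr (hrr' ▸ e ▸ hoo')
  have h2n := hκ.two_mul_le
  rcases hκ.two_le.eq_or_lt with ha | ha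
  · -- blocks of size two: split `{o, o'}`, put `{r, r'}` inside and `{s, s'}` outside
    subst ha
    obtain ⟨s, hs⟩ := hκ.exists_notMem {o, r}
      ((Nat.mul_le_mul_right _ Finset.card_le_two).trans_lt (by omega))
    simp only [Finset.mem_insert, Finset.mem_singleton, forall_eq_or_imp, forall_eq] at hs
    obtain ⟨s', hs', hss'⟩ := hκ.exists_ne s
    have ho : ∀ q, κ q = κ o → q = o' ∨ q = o := fun q hq => hκ.eq_or_eq ho' hoo' hq
    have hrb : ∀ q, κ q = κ r → q = r' ∨ q = r := fun q hq => hκ.eq_or_eq hr' hrr' hq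
    have hsb : ∀ q, κ q = κ s → q = s' ∨ q = s := fun q hq => hκ.eq_or_eq hs' hss' hq
    have k1 : s ≠ o := fun e => hs.1 (e ▸ rfl)
    have k2 : s ≠ r := fun e => hs.2 (e ▸ rfl)
    have k3 : s ≠ r' := fun e => hs.2 (e ▸ hrr')
    have k4 : s' ≠ o := fun e => hs.1 (hss' ▸ e ▸ rfl)
    have k5 : s' ≠ r := fun e => hs.2 (hss' ▸ e ▸ rfl)
    have k6 : s' ≠ r' := fun e => hs.2 (hss' ▸ e ▸ hrr')
    obtain ⟨Y, hY1, hY2, hYc⟩ := Finset.exists_subsuperset_card_eq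
      (s := ({o, r, r'} : Finset (Fin n))) (t := {o', s, s'}ᶜ) (n := X.card) (by
        intro p hp
        simp only [Finset.mem_insert, Finset.mem_singleton] at hp
        simp only [Finset.mem_compl, Finset.mem_insert, Finset.mem_singleton, not_or]
        rcases hp with rfl | rfl | rfl
        · exact ⟨ho'.symm, k1.symm, k4.symm⟩
        · exact ⟨hro', k2.symm, k5.symm⟩
        · exact ⟨hro2, k3.symm, k6.symm⟩)
      (Finset.card_le_three.trans hX) (by
        rw [Finset.card_compl, Fintype.card_fin]
        have := Finset.card_le_three (a := o') (b := s) (c := s')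
        omega)
    have y1 : o ∈ Y := hY1 (by simp)
    have y2 : r ∈ Y := hY1 (by simp)
    have y3 : r' ∈ Y := hY1 (by simp)
    have y4 : o' ∉ Y := fun h => by simpa using hY2 h
    have y5 : s ∉ Y := fun h => by simpa using hY2 h
    have y6 : s' ∉ Y := fun h => by simpa using hY2 h
    have c1 : (Finset.univ.filter fun q => κ q = κ o ∧ q ∈ Y).card = 1 := by
      rw [Finset.card_eq_one]
      refine ⟨o, ?_⟩
      ext q
      simp only [Finset.mem_filter, Finset.mem_univ, true_and, Finset.mem_singleton]
      refine ⟨fun h => (ho q h.1).resolve_left fun e => y4 (e ▸ h.2), ?_⟩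
      rintro rfl; exact ⟨rfl, y1⟩
    have c2 : (Finset.univ.filter fun q => κ q = κ r ∧ q ∈ Y).card = 2 := by
      rw [Finset.card_eq_two]
      refine ⟨r, r', hr'.symm, ?_⟩
      ext q
      simp only [Finset.mem_filter, Finset.mem_univ, true_and, Finset.mem_insert,
        Finset.mem_singleton]
      refine ⟨fun h => (hrb q h.1).symm, ?_⟩
      rintro (rfl | rfl)
      · exact ⟨rfl, y2⟩
      · exact ⟨hrr', y3⟩
    have c3 : (Finset.univ.filter fun q => κ q = κ s ∧ q ∈ Y).card = 0 := by
      rw [Finset.card_eq_zero, Finset.filter_eq_empty_iff]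
      rintro q - ⟨h, hq⟩
      rcases hsb q h with rfl | rfl
      · exact y6 hq
      · exact y5 hq
    exact ⟨Y, hYc, four_le_ncard_range' (p := o) (q := o') (r := r) (s := s) (k := 1) (l := 1)
      (l' := 2) (m := 0) (Prod.ext (decide_eq_true y1) c1)
      (Prod.ext (decide_eq_false y4) (by dsimp only; rw [hoo']; exact c1))
      (Prod.ext (decide_eq_true y2) c2) (Prod.ext (decide_eq_false y5) c3) (by norm_num)
      (by norm_num)⟩
  · -- larger blocks: exactly one point `o` of one block inside, and of another block two points
    -- `r`, `r'` inside and a point `z` outside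
    obtain ⟨z, hz, hzr⟩ : ∃ z, z ∉ ({r, r'} : Finset (Fin n)) ∧ κ z = κ r := by
      have := Finset.exists_mem_notMem_of_card_lt_card (s := {r, r'})
        (t := Finset.univ.filter fun y => κ y = κ r)
        (Finset.card_le_two.trans_lt (by rw [hκ.card]; exact ha))
      obtain ⟨z, hz, hz'⟩ := this
      exact ⟨z, hz', by simpa using hz⟩
    simp only [Finset.mem_insert, Finset.mem_singleton, not_or] at hz
    have hzo : z ≠ o := fun e => hr (hzr ▸ e ▸ rfl)
    obtain ⟨Y, hY1, hY2, hYc⟩ := Finset.exists_subsuperset_card_eq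
      (s := ({o, r, r'} : Finset (Fin n)))
      (t := (insert z ((Finset.univ.filter fun y => κ y = κ o).erase o))ᶜ) (n := X.card) (by
        intro p hp
        simp only [Finset.mem_insert, Finset.mem_singleton] at hp
        simp only [Finset.mem_compl, Finset.mem_insert, Finset.mem_erase, Finset.mem_filter,
          Finset.mem_univ, true_and, not_or]
        rcases hp with rfl | rfl | rfl
        · exact ⟨hzo.symm, fun h => h.1 rfl⟩
        · exact ⟨hz.1 ∘ Eq.symm, fun h => hr h.2⟩
        · exact ⟨hz.2 ∘ Eq.symm, fun h => hr (hrr' ▸ h.2)⟩)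
      (Finset.card_le_three.trans hX) (by
        rw [Finset.card_compl, Fintype.card_fin]
        have h1 := Finset.card_insert_le z ((Finset.univ.filter fun y => κ y = κ o).erase o)
        rw [Finset.card_erase_of_mem (by simp), hκ.card] at h1
        omega)
    have y1 : o ∈ Y := hY1 (by simp)
    have y2 : r ∈ Y := hY1 (by simp)
    have y3 : r' ∈ Y := hY1 (by simp)
    have y4 : z ∉ Y := fun h => by simpa using hY2 h
    have y5 : ∀ q, κ q = κ o → q ∈ Y → q = o := fun q h hq => by
      by_contra hqo
      have := hY2 hq
      simp [h, hqo] at this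
    have c1 : (Finset.univ.filter fun q => κ q = κ o ∧ q ∈ Y).card = 1 := by
      rw [Finset.card_eq_one]
      refine ⟨o, ?_⟩
      ext q
      simp only [Finset.mem_filter, Finset.mem_univ, true_and, Finset.mem_singleton]
      refine ⟨fun h => y5 q h.1 h.2, ?_⟩
      rintro rfl; exact ⟨rfl, y1⟩
    have c2 : 1 < (Finset.univ.filter fun q => κ q = κ r ∧ q ∈ Y).card :=
      Finset.one_lt_card.2 ⟨r, by simp [y2], r', by simp [y3, hrr'], hr'.symm⟩
    have y6 : o' ∉ Y := fun h => ho' (y5 _ hoo' h)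
    exact ⟨Y, hYc, four_le_ncard_range' (p := o) (q := o') (r := r) (s := z) (k := 1) (l := 1)
      (Prod.ext (decide_eq_true y1) c1)
      (Prod.ext (decide_eq_false y6) (by dsimp only; rw [hoo']; exact c1))
      (Prod.ext (decide_eq_true y2) rfl)
      (Prod.ext (decide_eq_false y4) (by dsimp only; rw [hzr])) c2.ne c2.ne⟩

section Colors
variable {ι : Type} [DecidableEq ι] {H : ι → Subgroup (Perm (Fin n))}

/-- Two imprimitive groups in favourable position preserve a two-colouring with large colour classes,
and a third one splits both classes. -/
theorem Colors.of_pairInv (hn : 13 ≤ n) {i j k : ι} (hij : i ≠ j) (hik : i ≠ k) (hjk : j ≠ k)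
    {κ κ' κ'' : Fin n → Fin n} {a a' a'' : ℕ} (hκ : IsSystem κ a) (hκ' : IsSystem κ' a')
    (hκ'' : IsSystem κ'' a'') (hi : H i ≤ sysStab κ) (hj : H j ≤ sysStab κ')
    (hk : H k ≤ sysStab κ'') (hp : PairInv κ κ') : Colors H {k, j, i} 4 := by
  classical
  obtain ⟨g, X, hX, hXn, hinv⟩ := hp
  -- pass to the complement if necessary
  obtain ⟨X, hX, hXn, hinv⟩ : ∃ X : Finset (Fin n), 3 ≤ X.card ∧ 2 * X.card ≤ n ∧
      ∀ x ∈ sysStab κ ⊓ sysStab (κ' ∘ g), ∀ p, x p ∈ X ↔ p ∈ X := by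
    by_cases h : 2 * X.card ≤ n
    · exact ⟨X, hX, h, hinv⟩
    · have hc : Xᶜ.card = n - X.card := by rw [Finset.card_compl, Fintype.card_fin]
      refine ⟨Xᶜ, by omega, by omega, fun x hx p => ?_⟩
      rw [Finset.mem_compl, Finset.mem_compl, hinv x hx]
  obtain ⟨f, hf⟩ := hκ''.exists_four_values hn hX hXn
  let o : Fin n := ⟨0, by omega⟩
  obtain ⟨p, hp, hpo⟩ := hκ.exists_ne o
  obtain ⟨p', hp', hpo'⟩ := hκ'.exists_ne o
  obtain ⟨p'', hp'', hpo''⟩ := hκ''.exists_ne o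
  have h1 := (Reach.top (H := H) ∅).insert_sysStab (i := i) (by simp) hp hpo hi 1
  have h2 := h1.insert_sysStab (i := j) (by simpa using hij.symm) hp' hpo' hj g
  have h3 := h2.insert_sysStab (i := k) (by simp [hik.symm, hjk.symm]) hp'' hpo'' hk f
  have hinv' : ∀ x ∈ ((⊤ ⊓ sysStab (κ ∘ (1 : Perm (Fin n)))) ⊓ sysStab (κ' ∘ g)) ⊓
      sysStab (κ'' ∘ f), ∀ p, x p ∈ X ↔ p ∈ X := fun x hx =>
    hinv x ⟨hx.1.1.2, hx.1.2⟩
  refine Reach.colors h3 (c := fun p => decide (p ∈ X))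
    (v := fun p => (Finset.univ.filter fun q => (κ'' ∘ f) q = (κ'' ∘ f) p ∧ q ∈ X).card)
    (fun x hx p => decide_eq_decide.2 (hinv' x hx p)) (fun x hx p => ?_) hf
  exact card_block_inter hx.2 (hinv' x hx) p

/-- Among three systems of blocks, two have sizes both equal to 2, both equal to `n / 2`, or both at
least 3 with sum less than `n`. -/
theorem Colors.of_three_imprim (hn : 13 ≤ n) {S : Finset ι} (hS : S.card = 3)
    (h : ∀ i ∈ S, Imprim (H i)) : Colors H S 4 := by
  obtain ⟨i, j, k, hij, hik, hjk, rfl⟩ := Finset.card_eq_three.1 hS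
  obtain ⟨κ, a, hκ, hi⟩ := h i (by simp)
  obtain ⟨κ', a', hκ', hj⟩ := h j (by simp)
  obtain ⟨κ'', a'', hκ'', hk⟩ := h k (by simp)
  have l := hκ.two_mul_le
  have l' := hκ'.two_mul_le
  have l'' := hκ''.two_mul_le
  -- two systems of blocks of sizes `s`, `t` in favourable position
  have key : ∀ {κ κ' : Fin n → Fin n} {s t : ℕ}, IsSystem κ s → IsSystem κ' t →
      (s = 2 ∧ t = 2 ∨ 2 * s = n ∧ 2 * t = n ∨ 3 ≤ s ∧ 3 ≤ t ∧ s + t < n) →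
      PairInv κ κ' ∨ PairInv κ' κ := by
    intro κ κ' s t hs ht h
    rcases h with ⟨rfl, rfl⟩ | ⟨h1, h2⟩ | ⟨h1, h2, h3⟩
    · exact Or.inl (hs.pairInv_two (by omega) ht)
    · have : s = t := by omega
      subst this
      exact Or.inl (hs.pairInv_half hn h1 ht)
    · rcases le_total s t with h | h
      · exact Or.inr (ht.pairInv_of_three_le hs h1 h (by omega))
      · exact Or.inl (hs.pairInv_of_three_le ht h2 h h3)
  have t1 := hκ.two_le
  have t2 := hκ'.two_le
  have t3 := hκ''.two_le
  have cases3 :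
      (a = 2 ∧ a' = 2 ∨ 2 * a = n ∧ 2 * a' = n ∨ 3 ≤ a ∧ 3 ≤ a' ∧ a + a' < n) ∨
      (a = 2 ∧ a'' = 2 ∨ 2 * a = n ∧ 2 * a'' = n ∨ 3 ≤ a ∧ 3 ≤ a'' ∧ a + a'' < n) ∨
      (a' = 2 ∧ a'' = 2 ∨ 2 * a' = n ∧ 2 * a'' = n ∨ 3 ≤ a' ∧ 3 ≤ a'' ∧ a' + a'' < n) := by
    omega
  rcases cases3 with h | h | h
  · rcases key hκ hκ' h with h | h
    · exact (Colors.of_pairInv hn hij hik hjk hκ hκ' hκ'' hi hj hk h).mono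
        (by intro x; simp only [Finset.mem_insert, Finset.mem_singleton]; tauto) le_rfl
    · exact (Colors.of_pairInv hn hij.symm hjk hik hκ' hκ hκ'' hj hi hk h).mono
        (by intro x; simp only [Finset.mem_insert, Finset.mem_singleton]; tauto) le_rfl
  · rcases key hκ hκ'' h with h | h
    · exact (Colors.of_pairInv hn hik hij hjk.symm hκ hκ'' hκ' hi hk hj h).mono
        (by intro x; simp only [Finset.mem_insert, Finset.mem_singleton]; tauto) le_rfl
    · exact (Colors.of_pairInv hn hik.symm hjk.symm hij hκ'' hκ hκ' hk hi hj h).mono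
        (by intro x; simp only [Finset.mem_insert, Finset.mem_singleton]; tauto) le_rfl
  · rcases key hκ' hκ'' h with h | h
    · exact (Colors.of_pairInv hn hjk hij.symm hik.symm hκ' hκ'' hκ hj hk hi h).mono
        (by intro x; simp only [Finset.mem_insert, Finset.mem_singleton]; tauto) le_rfl
    · exact (Colors.of_pairInv hn hjk.symm hik.symm hij.symm hκ'' hκ' hκ hk hj hi h).mono
        (by intro x; simp only [Finset.mem_insert, Finset.mem_singleton]; tauto) le_rfl

/-- If some `H i` is intransitive, or at least three of them are imprimitive, then the nonprimitive
groups among the `H i` produce one more colour than their number. -/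
theorem Colors.of_nonprim (hn : 13 ≤ n) (J : Finset ι)
    (hJ : ∀ i ∈ J, Intrans (H i) ∨ Imprim (H i))
    (h : (∃ i ∈ J, Intrans (H i)) ∨ 3 ≤ J.card) : Colors H J (min n (J.card + 1)) := by
  by_cases h1 : ∃ i ∈ J, Intrans (H i)
  · obtain ⟨i, hi, hI⟩ := h1
    have h2 := ((Colors.empty (H := H) (by omega)).insert_intrans (by omega)
      (Finset.notMem_empty i) hI).mono subset_rfl (m' := 2) (by omega)
    have h3 := h2.extend (by omega) le_rfl (J.erase i)
      (by simp) fun j hj => hJ j (Finset.mem_of_mem_erase hj)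
    have hc := Finset.card_erase_add_one hi
    refine h3.mono (fun j hj => ?_) (by omega)
    simp only [Finset.mem_union, Finset.mem_erase, Finset.mem_insert, Finset.notMem_empty,
      or_false] at hj
    rcases hj with h | rfl
    · exact h.2
    · exact hi
  · obtain ⟨S, hS, hSc⟩ := Finset.exists_subset_card_eq (h.resolve_left h1)
    have h2 := Colors.of_three_imprim (H := H) hn hSc fun i hi =>
      (hJ i (hS hi)).resolve_left fun hI => h1 ⟨i, hS hi, hI⟩
    have h3 := h2.extend (by omega) (by omega) (J \ S) Finset.sdiff_disjoint
      fun j hj => hJ j (Finset.mem_sdiff.1 hj).1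
    have hc := Finset.card_sdiff_add_card_eq_card hS
    exact h3.mono (by rw [Finset.sdiff_union_of_subset hS]) (by omega)

end Colors

/-! ### Orders of Young subgroups and numerical estimates -/

open scoped Nat

/-- The first three terms of the binomial expansion of `(s + 1) ^ k`. -/
theorem three_terms_le (s k : ℕ) :
    (s : ℤ) ^ k * (2 * s ^ 2 + 2 * k * s + (k ^ 2 - k)) ≤ 2 * s ^ 2 * (s + 1) ^ k := by
  induction k with
  | zero => simp
  | succ k ih =>
    have h0 : (0 : ℤ) ≤ (k : ℤ) ^ 2 - k := by
      rcases Nat.eq_zero_or_pos k with rfl | h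
      · simp
      · have : (1 : ℤ) ≤ k := by exact_mod_cast h
        nlinarith
    have h1 : (0 : ℤ) ≤ (s : ℤ) ^ k * ((k : ℤ) ^ 2 - k) := by positivity
    have h2 := mul_le_mul_of_nonneg_right ih (by positivity : (0 : ℤ) ≤ (s : ℤ) + 1)
    push_cast
    calc (s : ℤ) ^ (k + 1) * (2 * (s : ℤ) ^ 2 + 2 * ((k : ℤ) + 1) * s +
          (((k : ℤ) + 1) ^ 2 - ((k : ℤ) + 1)))
        = (s : ℤ) ^ k * (2 * s ^ 2 + 2 * k * s + (k ^ 2 - k)) * (s + 1)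
          - (s : ℤ) ^ k * ((k : ℤ) ^ 2 - k) := by ring
      _ ≤ 2 * (s : ℤ) ^ 2 * ((s : ℤ) + 1) ^ k * ((s : ℤ) + 1) := by linarith
      _ = _ := by ring

theorem two_mul_pow_le (s k : ℕ) (hk : k + 3 = s) (hs : 12 ≤ s) : 2 * s ^ k ≤ (s + 1) ^ k := by
  have h := three_terms_le s k
  have hk' : (k : ℤ) = s - 3 := by rw [← hk]; push_cast; ring
  have hs' : (12 : ℤ) ≤ s := by exact_mod_cast hs
  have h1 : (4 : ℤ) * s ^ 2 ≤ 2 * s ^ 2 + 2 * k * s + (k ^ 2 - k) := by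
    rw [hk']; nlinarith
  have h2 := mul_le_mul_of_nonneg_left h1 (by positivity : (0 : ℤ) ≤ (s : ℤ) ^ k)
  have h3 : (2 * (s : ℤ) ^ 2) * (2 * s ^ k) ≤ (2 * s ^ 2) * (s + 1) ^ k := by linarith
  have h4 := le_of_mul_le_mul_left h3 (by positivity)
  exact_mod_cast h4

theorem two_mul_add_two_pow_le (s k : ℕ) (hk : k + 4 = s) (hs : 20 ≤ s) :
    2 * (s + 2) * s ^ k ≤ (s + 1) ^ (k + 1) := by
  have h := three_terms_le s k
  have hk' : (k : ℤ) = s - 4 := by rw [← hk]; push_cast; ring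
  have hs' : (20 : ℤ) ≤ s := by exact_mod_cast hs
  have h1 : (4 : ℤ) * s ^ 2 * (s + 2)
      ≤ (2 * s ^ 2 + 2 * k * s + (k ^ 2 - k)) * (s + 1) := by
    rw [hk']
    nlinarith [mul_nonneg (sq_nonneg (s : ℤ)) (sub_nonneg.2 hs')]
  have h2 := mul_le_mul_of_nonneg_left h1 (by positivity : (0 : ℤ) ≤ (s : ℤ) ^ k)
  have h5 := mul_le_mul_of_nonneg_right h (by positivity : (0 : ℤ) ≤ (s : ℤ) + 1)
  have h3 : (2 * (s : ℤ) ^ 2) * (2 * (s + 2) * s ^ k) ≤ (2 * s ^ 2) * (s + 1) ^ (k + 1) := by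
    rw [pow_succ ((s : ℤ) + 1) k]; linarith
  have h4 := le_of_mul_le_mul_left h3 (by positivity)
  exact_mod_cast h4

/-- The estimate for a Young subgroup of order at most `s !`, reduced by the factor `120 = 5 !` and
then averaged over `s - 3` primitive groups. -/
theorem numeric_young {s N : ℕ} (hs : 9 ≤ s) (hN : 12 ≤ N) (hsN : s ≤ N) :
    s ! * 2 ^ (s - 3) < 120 * N ^ (s - 3) := by
  have key : ∀ s, 12 ≤ s → s ! * 2 ^ (s - 3) < 120 * s ^ (s - 3) := by
    intro s hs
    induction s, hs using Nat.le_induction with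
    | base => norm_num [Nat.factorial]
    | succ s hs ih =>
      obtain ⟨k, rfl⟩ := Nat.exists_eq_add_of_le' (show 3 ≤ s by omega)
      have h := two_mul_pow_le (k + 3) k rfl hs
      rw [Nat.factorial_succ]
      generalize (k + 3)! = F at ih ⊢
      rw [show k + 3 - 3 = k by omega] at ih
      rw [show k + 3 + 1 - 3 = k + 1 by omega]
      calc (k + 3 + 1) * F * 2 ^ (k + 1) = 2 * (k + 4) * (F * 2 ^ k) := by ring
        _ < 2 * (k + 4) * (120 * (k + 3) ^ k) := Nat.mul_lt_mul_of_pos_left ih (by omega)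
        _ = 120 * (k + 4) * (2 * (k + 3) ^ k) := by ring
        _ ≤ 120 * (k + 4) * (k + 3 + 1) ^ k := Nat.mul_le_mul_left _ h
        _ = _ := by ring
  rcases le_or_gt 12 s with h | h
  · exact (key s h).trans_le (Nat.mul_le_mul_left _ (Nat.pow_le_pow_left hsN _))
  · have : s ! * 2 ^ (s - 3) < 120 * 12 ^ (s - 3) := by
      interval_cases s <;> norm_num [Nat.factorial]
    exact this.trans_le (Nat.mul_le_mul_left _ (Nat.pow_le_pow_left hN _))

/-- The estimate for a primitive group of order at most `n ! / k !`, averaged over `n - 5` further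
primitive groups. -/
theorem numeric_prim {n : ℕ} (hn : 13 ≤ n) :
    ∃ k, 2 * k ≤ n + 1 ∧ n ! * 2 ^ (n - 5) < k ! * (n - 1) ^ (n - 5) := by
  have key : ∀ n, 21 ≤ n → n ! * 2 ^ (n - 5) < 8 ! * (n - 1) ^ (n - 5) := by
    intro n hn
    induction n, hn using Nat.le_induction with
    | base => norm_num [Nat.factorial]
    | succ n hn ih =>
      obtain ⟨k, rfl⟩ := Nat.exists_eq_add_of_le' (show 5 ≤ n by omega)
      have h := two_mul_add_two_pow_le (k + 4) k rfl (by omega)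
      rw [Nat.factorial_succ]
      generalize (k + 5)! = F at ih ⊢
      generalize 8 ! = E at ih ⊢
      rw [show k + 5 - 5 = k by omega, show k + 5 - 1 = k + 4 by omega] at ih
      rw [show k + 5 + 1 - 5 = k + 1 by omega, show k + 5 + 1 - 1 = k + 5 by omega]
      calc (k + 5 + 1) * F * 2 ^ (k + 1) = 2 * (k + 6) * (F * 2 ^ k) := by ring
        _ < 2 * (k + 6) * (E * (k + 4) ^ k) := Nat.mul_lt_mul_of_pos_left ih (by omega)
        _ = E * (2 * (k + 4 + 2) * (k + 4) ^ k) := by ring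
        _ ≤ E * (k + 4 + 1) ^ (k + 1) := Nat.mul_le_mul_left _ h
        _ = _ := by ring
  rcases le_or_gt 21 n with h | h
  · exact ⟨8, by omega, key n h⟩
  rcases le_or_gt 15 n with h' | h'
  · refine ⟨8, by omega, ?_⟩
    interval_cases n <;> norm_num [Nat.factorial]
  · refine ⟨7, by omega, ?_⟩
    interval_cases n <;> norm_num [Nat.factorial]

theorem factorial_mul_factorial_le (b m : ℕ) : (b + 1)! * (m + 1)! ≤ (b + m + 1)! := by
  induction b with
  | zero => simp
  | succ b ih =>
    calc (b + 1 + 1)! * (m + 1)! = (b + 1 + 1) * ((b + 1)! * (m + 1)!) := by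
          rw [Nat.factorial_succ (b + 1)]; ring
      _ ≤ (b + 1 + m + 1) * (b + m + 1)! := Nat.mul_le_mul (by omega) ih
      _ = (b + 1 + m + 1)! := by
          rw [show b + 1 + m + 1 = (b + m + 1) + 1 by ring, Nat.factorial_succ (b + m + 1)]

theorem prod_factorial_le {γ : Type} (s : Finset γ) (a : γ → ℕ) :
    ∏ i ∈ s, (a i + 1)! ≤ (∑ i ∈ s, a i + 1)! := by
  classical
  induction s using Finset.induction_on with
  | empty => simp
  | insert i s hi ih =>
    rw [Finset.prod_insert hi, Finset.sum_insert hi]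
    exact (Nat.mul_le_mul_left _ ih).trans (factorial_mul_factorial_le _ _)

open scoped Classical in
/-- The order of a Young subgroup, in terms of the colour classes with one point removed. -/
theorem exists_young_card {γ : Type} (c : Fin n → γ) :
    ∃ a : Set.range c → ℕ, ∑ i, a i + (Set.range c).ncard = n ∧
      Nat.card (young c) = ∏ i, (a i + 1)! ∧
      ∀ i, ∃ A : Finset (Fin n), A.card = a i + 1 ∧ ∀ p ∈ A, ∀ q ∈ A, c p = c q := by
  classical
  let c' : Fin n → Set.range c := fun p => ⟨c p, p, rfl⟩
  have hc' : ∀ p q, c' p = c' q ↔ c p = c q := fun p q => Subtype.ext_iff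
  have hpos : ∀ i : Set.range c, 0 < Fintype.card {p // c' p = i} := by
    rintro ⟨_, p, rfl⟩
    exact Fintype.card_pos_iff.2 ⟨⟨p, rfl⟩⟩
  have hp : ∀ i, Fintype.card {p // c' p = i} - 1 + 1 = Fintype.card {p // c' p = i} :=
    fun i => Nat.succ_pred_eq_of_pos (hpos i)
  refine ⟨fun i => Fintype.card {p // c' p = i} - 1, ?_, ?_, fun i => ?_⟩
  · have h1 : ∑ i, Fintype.card {p // c' p = i} = n := by
      have := Fintype.card_congr (Equiv.sigmaFiberEquiv c')
      rwa [Fintype.card_sigma, Fintype.card_fin] at this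
    rw [← Nat.card_coe_set_eq, Nat.card_eq_fintype_card, ← Finset.card_univ,
      Finset.card_eq_sum_ones, ← Finset.sum_add_distrib]
    simp only [hp]
    exact h1
  · simp only [hp]
    rw [← DomMulAct.stabilizer_card c', ← Nat.card_eq_fintype_card]
    refine Nat.card_congr (Equiv.subtypeEquivRight fun x => ?_)
    rw [funext_iff]
    exact forall_congr' fun p => (hc' _ _).symm
  · refine ⟨Finset.univ.filter fun p => c' p = i, ?_, fun p hp q hq => ?_⟩
    · rw [hp, Fintype.card_subtype]
    · rw [← hc', (Finset.mem_filter.1 hp).2, (Finset.mem_filter.1 hq).2]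

/-- The order of a Young subgroup is largest when all surplus points share one colour. -/
theorem card_young_le {γ : Type} {c : Fin n → γ} {t : ℕ} (h : n ≤ (Set.range c).ncard + t) :
    Nat.card (young c) ≤ (t + 1)! := by
  obtain ⟨a, h1, h2, -⟩ := exists_young_card c
  rw [h2]
  exact (prod_factorial_le _ _).trans (Nat.factorial_le (by omega))

/-- A Young subgroup is small unless there are five points of the same colour. -/
theorem card_young_le_pow {γ : Type} {c : Fin n → γ} {t : ℕ} (h : n ≤ (Set.range c).ncard + t) :
    (∃ A : Finset (Fin n), A.card = 5 ∧ ∀ p ∈ A, ∀ q ∈ A, c p = c q) ∨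
      Nat.card (young c) ≤ 3 ^ t := by
  classical
  obtain ⟨a, h1, h2, h3⟩ := exists_young_card c
  by_cases h4 : ∃ i, 5 ≤ a i + 1
  · left
    obtain ⟨i, hi⟩ := h4
    obtain ⟨A, hA, hAc⟩ := h3 i
    obtain ⟨B, hB, hBc⟩ := Finset.exists_subset_card_eq (hi.trans hA.ge)
    exact ⟨B, hBc, fun p hp q hq => hAc p (hB hp) q (hB hq)⟩
  · right
    push Not at h4
    rw [h2]
    calc ∏ i, (a i + 1)! ≤ ∏ i, 3 ^ a i := by
          refine Finset.prod_le_prod' fun i _ => ?_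
          have := h4 i
          have h5 : a i < 4 := by omega
          interval_cases a i <;> norm_num [Nat.factorial]
      _ = 3 ^ ∑ i, a i := Finset.prod_pow_eq_pow_sum _ _ _
      _ ≤ 3 ^ t := Nat.pow_le_pow_right (by norm_num) (by omega)

/-- A colouring with at least `n - 1` colours identifies at most one pair of points. -/
theorem young_le_closure_swap (hn : 2 ≤ n) {γ : Type} {c : Fin n → γ}
    (h : n ≤ (Set.range c).ncard + 1) :
    ∃ p q, p ≠ q ∧ young c ≤ Subgroup.closure {swap p q} := by
  classical
  by_cases hc : ∃ p q, p ≠ q ∧ c p = c q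
  · obtain ⟨p, q, hpq, hc⟩ := hc
    refine ⟨p, q, hpq, ?_⟩
    have hle : Subgroup.closure {swap p q} ≤ young c := by
      rw [Subgroup.closure_le, Set.singleton_subset_iff]
      intro r
      rw [swap_apply_def]
      split_ifs with h1 h2
      · rw [h1, hc]
      · rw [h2, hc]
      · rfl
    have hcard : Nat.card (Subgroup.closure {swap p q}) = 2 := by
      rw [← Subgroup.zpowers_eq_closure, Nat.card_zpowers]
      exact (show (swap p q).IsSwap from ⟨p, q, hpq, rfl⟩).orderOf
    exact (Subgroup.eq_of_le_of_card_ge hle (by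
      rw [hcard]; exact (card_young_le h).trans (by norm_num [Nat.factorial]))).ge
  · push Not at hc
    refine ⟨⟨0, by omega⟩, ⟨1, by omega⟩, by simp, fun x hx => ?_⟩
    have : x = 1 := Equiv.ext fun p => by
      by_contra hp
      exact hc _ _ hp (hx p)
    rw [this]
    exact Subgroup.one_mem _

/-! ### Assembly -/

section Assembly
variable {ι : Type} [DecidableEq ι] {H : ι → Subgroup (Perm (Fin n))}

/-- Each primitive group, suitably conjugated, divides the number of nontrivial elements by
`(n - 1) / 2`. -/
theorem Reach.average (hn : 13 ≤ n) {S : Finset ι} {K : Subgroup (Perm (Fin n))}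
    (h : Reach H S K) (T : Finset ι) (hd : Disjoint T S) (hT : ∀ i ∈ T, IsSmallPrim (H i)) :
    ∃ L, Reach H (T ∪ S) L ∧
      (n - 1) ^ T.card * (Nat.card L - 1) ≤ 2 ^ T.card * (Nat.card K - 1) := by
  induction T using Finset.induction_on with
  | empty => exact ⟨K, by simpa using h, by simp⟩
  | insert i T hi ih =>
    rw [Finset.disjoint_insert_left] at hd
    obtain ⟨L, hL, hLc⟩ := ih hd.2 fun j hj => hT j (Finset.mem_insert_of_mem hj)
    obtain ⟨g, hg, hgc⟩ := exists_conj_card_inf_le (hT i (Finset.mem_insert_self _ _)) hn L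
    refine ⟨_, by
      rw [Finset.insert_union]
      exact hL.insert (i := i) (by simp [hi, hd.1]) hg, ?_⟩
    rw [Finset.card_insert_of_notMem hi]
    calc (n - 1) ^ (T.card + 1) * (Nat.card (L ⊓ conjSub g (H i) : Subgroup _) - 1)
        = (n - 1) ^ T.card * ((n - 1) * (Nat.card (L ⊓ conjSub g (H i) : Subgroup _) - 1)) := by
          ring
      _ ≤ (n - 1) ^ T.card * (2 * (Nat.card L - 1)) := Nat.mul_le_mul_left _ hgc
      _ = 2 * ((n - 1) ^ T.card * (Nat.card L - 1)) := by ring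
      _ ≤ 2 * (2 ^ T.card * (Nat.card K - 1)) := Nat.mul_le_mul_left _ hLc
      _ = 2 ^ (T.card + 1) * (Nat.card K - 1) := by ring

theorem Reach.bot_of_lt (hn : 13 ≤ n) {S : Finset ι} {K : Subgroup (Perm (Fin n))}
    (h : Reach H S K) (T : Finset ι) (hd : Disjoint T S) (hT : ∀ i ∈ T, IsSmallPrim (H i))
    (hlt : 2 ^ T.card * (Nat.card K - 1) < (n - 1) ^ T.card) : Reach H (T ∪ S) ⊥ := by
  obtain ⟨L, hL, hLc⟩ := h.average hn T hd hT
  refine hL.mono subset_rfl (Subgroup.eq_bot_of_card_le L ?_).le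
  by_contra hc
  have h1 : (n - 1) ^ T.card * 1 ≤ (n - 1) ^ T.card * (Nat.card L - 1) :=
    Nat.mul_le_mul_left _ (by omega)
  omega

/-- Primitive groups alone: Bochert's bound for the first one, averaging for the others. -/
theorem Reach.bot_of_prim (hn : 13 ≤ n) (T : Finset ι) (hTc : n - 4 ≤ T.card)
    (hT : ∀ i ∈ T, IsSmallPrim (H i)) : Reach H T ⊥ := by
  obtain ⟨U, hU, hUc⟩ := Finset.exists_subset_card_eq hTc
  obtain ⟨i, hi⟩ : U.Nonempty := Finset.card_pos.1 (by omega)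
  obtain ⟨k, hk, hlt⟩ := numeric_prim hn
  have hc := (hT i (hU hi)).card_mul_factorial_le hk
  have h1 := (Reach.top (H := H) ∅).insert (Finset.notMem_empty i)
    (Subgroup.one_mem (alternatingGroup (Fin n)))
  have h2 : Reach H {i} (H i) := h1.mono subset_rfl fun x hx => by
    have := mem_conjSub.1 (show x ∈ conjSub 1 (H i) from hx.2)
    simpa using this
  have hUe : (U.erase i).card = n - 5 := by rw [Finset.card_erase_of_mem hi, hUc]; omega
  refine (h2.bot_of_lt hn (U.erase i) (by simp)
    (fun j hj => hT j (hU (Finset.mem_of_mem_erase hj))) ?_).mono (fun j hj => ?_) le_rfl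
  · rw [hUe]
    have h3 : 2 ^ (n - 5) * (Nat.card (H i) - 1) * k ! < (n - 1) ^ (n - 5) * k ! := by
      calc 2 ^ (n - 5) * (Nat.card (H i) - 1) * k ! ≤ 2 ^ (n - 5) * (Nat.card (H i) * k !) := by
            rw [mul_assoc]
            exact Nat.mul_le_mul_left _ (Nat.mul_le_mul_right _ (Nat.sub_le _ _))
        _ ≤ 2 ^ (n - 5) * n ! := Nat.mul_le_mul_left _ hc
        _ = n ! * 2 ^ (n - 5) := mul_comm _ _
        _ < k ! * (n - 1) ^ (n - 5) := hlt
        _ = _ := mul_comm _ _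
    exact lt_of_mul_lt_mul_right h3 (Nat.zero_le _)
  · simp only [Finset.mem_union, Finset.mem_erase, Finset.mem_singleton] at hj
    rcases hj with h | rfl
    · exact hU h.2
    · exact hU hi

/-- A Young subgroup with at least `n - 1 - t` colours is cut down to the trivial group by `t`
primitive groups, where `t` is the size of `T`. -/
theorem Reach.bot_of_young (hn : 13 ≤ n) {γ : Type} {c : Fin n → γ} {S : Finset ι}
    (h : Reach H S (young c)) (T : Finset ι) (hd : Disjoint T S) (hT : ∀ i ∈ T, IsSmallPrim (H i))
    (hT0 : 1 ≤ T.card) (hTn : T.card + 3 ≤ n)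
    (hc : n ≤ (Set.range c).ncard + (T.card + 1)) : Reach H (T ∪ S) ⊥ := by
  have hcard := card_young_le hc
  rcases le_or_gt T.card 6 with h6 | h6
  · refine h.bot_of_lt hn T hd hT ?_
    generalize T.card = t at *
    refine lt_of_le_of_lt (Nat.mul_le_mul_left _ (Nat.sub_le_sub_right hcard 1)) ?_
    refine lt_of_lt_of_le (b := 12 ^ t) ?_ (Nat.pow_le_pow_left (by omega) _)
    interval_cases t <;> norm_num [Nat.factorial]
  rcases card_young_le_pow hc with ⟨A, hA, hAc⟩ | h3
  · -- the first primitive group meets the symmetric group on `A` trivially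
    obtain ⟨i, hi⟩ : T.Nonempty := Finset.card_pos.1 hT0
    have hiS : i ∉ S := Finset.disjoint_left.1 hd hi
    have h1 := h.insert hiS (Subgroup.one_mem (alternatingGroup (Fin n)))
    have h2 : Nat.card (young c ⊓ conjSub 1 (H i) : Subgroup _) * A.card ! ≤
        Nat.card (young c) := by
      refine card_mul_factorial_le inf_le_left A (fun x hx hxA => ?_) fun x hxA p => ?_
      · by_contra hx1
        have hxH : x ∈ H i := by simpa [mem_conjSub] using hx.2
        have h5 := (hT i hi).five_lt_card_support hn hxH hx1
        have : x.support.card ≤ A.card := Finset.card_le_card fun p hp => by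
          by_contra hpA
          exact (Perm.mem_support.1 hp) (hxA p hpA)
        omega
      · by_cases hp : p ∈ A
        · refine hAc _ ?_ _ hp
          by_contra hxp
          exact hxp (by rwa [x.injective (hxA _ hxp)])
        · rw [hxA p hp]
    rw [hA] at h2
    have hTe : (T.erase i).card = T.card - 1 := Finset.card_erase_of_mem hi
    refine (h1.bot_of_lt hn (T.erase i) ?_
      (fun j hj => hT j (Finset.mem_of_mem_erase hj)) ?_).mono (fun j hj => ?_) le_rfl
    · rw [Finset.disjoint_insert_right]
      exact ⟨Finset.notMem_erase _ _, Finset.disjoint_of_subset_left (Finset.erase_subset _ _) hd⟩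
    · have h4 := numeric_young (s := T.card + 2) (N := n - 1) (by omega) (by omega) (by omega)
      rw [hTe]
      rw [show T.card + 2 - 3 = T.card - 1 by omega] at h4
      have h5 : (5 ! : ℕ) = 120 := rfl
      rw [h5] at h2
      generalize T.card - 1 = u at *
      generalize Nat.card (young c ⊓ conjSub 1 (H i) : Subgroup _) = m at *
      have h7 : 120 * (2 ^ u * (m - 1)) < 120 * (n - 1) ^ u := by
        calc 120 * (2 ^ u * (m - 1)) ≤ 120 * (2 ^ u * m) :=
              Nat.mul_le_mul_left _ (Nat.mul_le_mul_left _ (Nat.sub_le _ _))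
          _ = (m * 120) * 2 ^ u := by ring
          _ ≤ (T.card + 2)! * 2 ^ u := Nat.mul_le_mul_right _ (h2.trans hcard)
          _ < _ := h4
      exact lt_of_mul_lt_mul_left h7 (Nat.zero_le _)
    · simp only [Finset.mem_union, Finset.mem_erase, Finset.mem_insert] at hj ⊢
      rcases hj with h | rfl | h
      · exact Or.inl h.2
      · exact Or.inl hi
      · exact Or.inr h
  · refine h.bot_of_lt hn T hd hT ?_
    have hpos : 0 < Nat.card (young c) := Nat.card_pos
    generalize T.card = t at *
    generalize Nat.card (young c) = m at *
    have e1 : 3 ≤ 2 ^ t := le_trans (by norm_num) (Nat.pow_le_pow_right (n := 2) (by norm_num)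
      (show 2 ≤ t by omega))
    calc 2 ^ t * (m - 1) < 2 ^ t * m := Nat.mul_lt_mul_of_pos_left (by omega) (by positivity)
      _ ≤ 2 ^ t * 3 ^ (t + 1) := Nat.mul_le_mul_left _ h3
      _ = 3 * (2 ^ t * 3 ^ t) := by ring
      _ ≤ 2 ^ t * (2 ^ t * 3 ^ t) := Nat.mul_le_mul_right _ e1
      _ = 12 ^ t := by rw [← mul_pow, ← mul_pow]; norm_num
      _ ≤ (n - 1) ^ t := Nat.pow_le_pow_left (by omega) _

end Assembly

/-- A common form of both cases: the subgroups need only fail to contain the alternating group, and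
the conjugating elements can be taken even. -/
theorem exists_even_conj_inf_le (hn : 13 ≤ n) (H : Fin (n - 2) → Subgroup (Perm (Fin n)))
    (hH : ∀ i, ¬ alternatingGroup (Fin n) ≤ H i) :
    ∃ (g : Fin (n - 2) → Perm (Fin n)) (p q : Fin n), (∀ i, g i ∈ alternatingGroup (Fin n)) ∧
      p ≠ q ∧ (⨅ i, conjSub (g i) (H i)) ≤ Subgroup.closure {swap p q} := by
  classical
  suffices h : ∃ (p q : Fin n), p ≠ q ∧ Reach H Finset.univ (Subgroup.closure {swap p q}) by
    obtain ⟨p, q, hpq, g, hg, hx⟩ := h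
    refine ⟨g, p, q, hg, hpq, fun x h => hx x fun i _ => ?_⟩
    exact (Subgroup.mem_iInf.1 h) i
  have hbot : Reach H Finset.univ ⊥ →
      ∃ (p q : Fin n), p ≠ q ∧ Reach H Finset.univ (Subgroup.closure {swap p q}) := fun h =>
    ⟨⟨0, by omega⟩, ⟨1, by omega⟩, by simp, h.mono subset_rfl bot_le⟩
  set J := Finset.univ.filter fun i => Intrans (H i) ∨ Imprim (H i) with hJ
  have hJ' : ∀ i ∈ J, Intrans (H i) ∨ Imprim (H i) := fun i hi => (Finset.mem_filter.1 hi).2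
  have hP : ∀ i ∈ Jᶜ, IsSmallPrim (H i) := fun i hi => by
    refine ⟨?_, hH i⟩
    simp only [hJ, Finset.mem_compl, Finset.mem_filter, Finset.mem_univ, true_and, not_or] at hi
    exact ((trichotomy (H i)).resolve_left hi.1).resolve_left hi.2
  have hcc : J.card + Jᶜ.card = n - 2 := by
    rw [Finset.card_add_card_compl, Fintype.card_fin]
  by_cases h : (∃ i ∈ J, Intrans (H i)) ∨ 3 ≤ J.card
  · obtain ⟨γ, c, hr, hc⟩ := Colors.of_nonprim hn J hJ' h
    have hJ1 : 1 ≤ J.card := by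
      rcases h with ⟨i, hi, -⟩ | h
      · exact Finset.card_pos.2 ⟨i, hi⟩
      · omega
    rcases Nat.eq_zero_or_pos Jᶜ.card with h0 | h0
    · obtain ⟨p, q, hpq, hle⟩ := young_le_closure_swap (c := c) (by omega) (by omega)
      exact ⟨p, q, hpq, hr.mono (Finset.subset_univ _) hle⟩
    · exact hbot ((hr.bot_of_young hn Jᶜ disjoint_compl_left hP h0 (by omega) (by omega)).mono
        (Finset.subset_univ _) le_rfl)
  · push Not at h
    exact hbot ((Reach.bot_of_prim hn Jᶜ (by omega) hP).mono (Finset.subset_univ _) le_rfl)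

end

theorem core_free_tuples_almost_regular (n : ℕ) (hn : 13 ≤ n) :
    -- G = Sₙ
    (∀ H : Fin (n - 2) → Subgroup (Equiv.Perm (Fin n)),
        (∀ i, (H i).normalCore = ⊥) →
        ∃ (g : Fin (n - 2) → Equiv.Perm (Fin n)) (α β : Fin n), α ≠ β ∧
          (⨅ i, conjSub (g i) (H i)) ≤ Subgroup.closure {Equiv.swap α β}) ∧
    -- G = Aₙ
    (∀ H : Fin (n - 2) → Subgroup ↥(alternatingGroup (Fin n)),
        (∀ i, (H i).normalCore = ⊥) →
        ∃ (g : Fin (n - 2) → ↥(alternatingGroup (Fin n))) (α β : Fin n), α ≠ β ∧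
          (⨅ i, conjSub (g i) (H i)).map (alternatingGroup (Fin n)).subtype ≤
            Subgroup.closure {Equiv.swap α β}) := by
  have hne : alternatingGroup (Fin n) ≠ ⊥ := by
    have : Nontrivial (alternatingGroup (Fin n)) :=
      alternatingGroup.nontrivial_of_three_le_card (by rw [Nat.card_eq_fintype_card, Fintype.card_fin]; omega)
    exact (Subgroup.nontrivial_iff_ne_bot _).1 this
  refine ⟨fun H hH => ?_, fun H hH => ?_⟩
  · obtain ⟨g, p, q, -, hpq, hle⟩ := exists_even_conj_inf_le hn H fun i hi => hne <| by
      rw [← le_bot_iff, ← hH i]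
      exact Subgroup.normal_le_normalCore.2 hi
    exact ⟨g, p, q, hpq, hle⟩
  · obtain ⟨g, p, q, hg, hpq, hle⟩ := exists_even_conj_inf_le hn
      (fun i => (H i).map (alternatingGroup (Fin n)).subtype) fun i hi => by
        have htop : H i = ⊤ := by
          rw [eq_top_iff]
          rintro ⟨x, hx⟩ -
          obtain ⟨y, hy, hyx⟩ := hi hx
          have : y = ⟨x, hx⟩ := Subtype.ext hyx
          exact this ▸ hy
        have h1 : (⊤ : Subgroup (alternatingGroup (Fin n))) ≤ ⊥ := by
          rw [← hH i]
          exact Subgroup.normal_le_normalCore.2 htop.ge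
        refine hne ((Subgroup.eq_bot_iff_forall _).2 fun x hx => ?_)
        have := h1 (Subgroup.mem_top (⟨x, hx⟩ : alternatingGroup (Fin n)))
        exact congrArg Subtype.val (Subgroup.mem_bot.1 this)
    refine ⟨fun i => ⟨g i, hg i⟩, p, q, hpq, le_trans ?_ hle⟩
    rintro _ ⟨x, hx, rfl⟩
    refine Subgroup.mem_iInf.2 fun i => ?_
    have := (Subgroup.mem_iInf.1 hx) i
    rw [mem_conjSub] at this ⊢
    exact ⟨_, this, rfl⟩
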